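/- arXiv:0903.2992 — 2 statements merged into one kernel-verified Lean document; each statement's English description precedes it below -/
import Mathlib

section
/- Let Γ be of type A_∞, Λ = Σ λ_i·i ∈ ℕ[I], and i = i_1…i_r…i_m ∈ Seq(ν). Then the nilpotency degree of x_{r,i} in the cyclotomic quotient R_ν^Λ is at most the r-antigravity bound b_r = Σ_{j ∈ Supp(a_r(i))} λ_j, i.e. x_{r,i}^{b_r} = 0 in R_ν^Λ. -/
namespace KLRPaper


/-- The sequence obtained from `i` by swapping the entries in positions `r` and `r+1`
(0-indexed); identity if `r+1` is out of range. -/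
def swapSeq {I : Type} {m : ℕ} (r : ℕ) (i : Fin m → I) : Fin m → I :=
  fun k =>
    if h : r + 1 < m then
      i (Equiv.swap (⟨r, Nat.lt_of_succ_lt h⟩ : Fin m) (⟨r + 1, h⟩ : Fin m) k)
    else i k

/-- The Khovanov–Lauda–Rouquier algebra of a simply-laced quiver with vertex set `I`
and adjacency relation `adj`, on `m` strands, presented by its generators
(idempotents `e i`, dots `x r i`, crossings `δ r i`) and the KLR relations. -/
structure KLR (I : Type) [DecidableEq I] (adj : I → I → Prop) (m : ℕ)
    (A : Type) [Ring A] where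
  e : (Fin m → I) → A
  x : Fin m → (Fin m → I) → A
  δ : ℕ → (Fin m → I) → A
  e_mul_e : ∀ i j, e i * e j = if i = j then e i else 0
  e_mul_x : ∀ r i, e i * x r i = x r i
  x_mul_e : ∀ r i, x r i * e i = x r i
  x_mul_x : ∀ r s i, x r i * x s i = x s i * x r i
  e_mul_δ : ∀ (r : ℕ) (i : Fin m → I), e (swapSeq r i) * δ r i = δ r i
  δ_mul_e : ∀ (r : ℕ) (i : Fin m → I), δ r i * e i = δ r i
  δδ_same : ∀ (r : ℕ) (h : r + 1 < m) (i : Fin m → I),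
    i ⟨r, Nat.lt_of_succ_lt h⟩ = i ⟨r + 1, h⟩ →
    δ r (swapSeq r i) * δ r i = 0
  δδ_orth : ∀ (r : ℕ) (h : r + 1 < m) (i : Fin m → I),
    i ⟨r, Nat.lt_of_succ_lt h⟩ ≠ i ⟨r + 1, h⟩ →
    ¬ adj (i ⟨r, Nat.lt_of_succ_lt h⟩) (i ⟨r + 1, h⟩) →
    δ r (swapSeq r i) * δ r i = e i
  δδ_adj : ∀ (r : ℕ) (h : r + 1 < m) (i : Fin m → I),
    adj (i ⟨r, Nat.lt_of_succ_lt h⟩) (i ⟨r + 1, h⟩) →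
    δ r (swapSeq r i) * δ r i = x ⟨r, Nat.lt_of_succ_lt h⟩ i + x ⟨r + 1, h⟩ i
  δx_far : ∀ (r : ℕ) (s : Fin m) (i : Fin m → I), s.val ≠ r → s.val ≠ r + 1 →
    δ r i * x s i = x s (swapSeq r i) * δ r i
  δx_diff1 : ∀ (r : ℕ) (h : r + 1 < m) (i : Fin m → I),
    i ⟨r, Nat.lt_of_succ_lt h⟩ ≠ i ⟨r + 1, h⟩ →
    δ r i * x ⟨r, Nat.lt_of_succ_lt h⟩ i = x ⟨r + 1, h⟩ (swapSeq r i) * δ r i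
  δx_diff2 : ∀ (r : ℕ) (h : r + 1 < m) (i : Fin m → I),
    i ⟨r, Nat.lt_of_succ_lt h⟩ ≠ i ⟨r + 1, h⟩ →
    δ r i * x ⟨r + 1, h⟩ i = x ⟨r, Nat.lt_of_succ_lt h⟩ (swapSeq r i) * δ r i
  δx_same1 : ∀ (r : ℕ) (h : r + 1 < m) (i : Fin m → I),
    i ⟨r, Nat.lt_of_succ_lt h⟩ = i ⟨r + 1, h⟩ →
    δ r i * x ⟨r, Nat.lt_of_succ_lt h⟩ i - x ⟨r + 1, h⟩ (swapSeq r i) * δ r i = e i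
  δx_same2 : ∀ (r : ℕ) (h : r + 1 < m) (i : Fin m → I),
    i ⟨r, Nat.lt_of_succ_lt h⟩ = i ⟨r + 1, h⟩ →
    x ⟨r, Nat.lt_of_succ_lt h⟩ (swapSeq r i) * δ r i - δ r i * x ⟨r + 1, h⟩ i = e i
  braid_easy : ∀ (r : ℕ) (h : r + 2 < m) (i : Fin m → I),
    ¬ (i ⟨r, by omega⟩ = i ⟨r + 2, h⟩ ∧ adj (i ⟨r, by omega⟩) (i ⟨r + 1, by omega⟩)) →
    δ r (swapSeq (r + 1) (swapSeq r i)) * δ (r + 1) (swapSeq r i) * δ r i =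
      δ (r + 1) (swapSeq r (swapSeq (r + 1) i)) * δ r (swapSeq (r + 1) i) * δ (r + 1) i
  braid_hard : ∀ (r : ℕ) (h : r + 2 < m) (i : Fin m → I),
    i ⟨r, by omega⟩ = i ⟨r + 2, h⟩ → adj (i ⟨r, by omega⟩) (i ⟨r + 1, by omega⟩) →
    δ r (swapSeq (r + 1) (swapSeq r i)) * δ (r + 1) (swapSeq r i) * δ r i -
      δ (r + 1) (swapSeq r (swapSeq (r + 1) i)) * δ r (swapSeq (r + 1) i) * δ (r + 1) i
      = e i

/-- The cyclotomic quotient `R_ν^Λ` of the KLR algebra at the dominant weight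
`Λ = Σ λ_i · i` (a finitely supported function `I →₀ ℕ`): it additionally satisfies
`x_{1,i}^{λ_{i₁}} 1_i = 0` for every sequence `i`. -/
structure CycKLR (I : Type) [DecidableEq I] (adj : I → I → Prop) (m : ℕ)
    (A : Type) [Ring A] (Λ : I →₀ ℕ) extends KLR I adj m A where
  cyc : ∀ (h : 0 < m) (i : Fin m → I), x ⟨0, h⟩ i ^ Λ (i ⟨0, h⟩) * e i = 0



/-- Adjacency for the type `A_∞` quiver with vertex set `ℤ`. -/
def adjZ (u v : ℤ) : Prop := (u - v).natAbs = 1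

/-- The heap covering relation for the bead-and-runner diagram of the sequence `l`
(type `A_∞`): bead `a` is directly below bead `b` if it was placed earlier and its
runner is at distance at most one from the runner of `b`. -/
def HeapRel (l : List ℤ) (a b : ℕ) : Prop :=
  a < b ∧ b < l.length ∧ (l.getD a 0 - l.getD b 0).natAbs ≤ 1

/-- Bead `k` is trapped below the anchored bead `r` in antigravity: there is a chain
of beads from `k` up to `r`, each step going to a later bead on the same or an
adjacent runner. -/
def Trapped (l : List ℤ) (r k : ℕ) : Prop :=
  Relation.ReflTransGen (HeapRel l) k r

open Classical in
/-- The support of the `r`-stable antigravity configuration `a_r(l)`: the set of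
runners carrying a bead trapped below the anchored bead `r`. -/
noncomputable def trappedRunners (l : List ℤ) (r : ℕ) : Finset ℤ :=
  ((Finset.range l.length).filter fun k => Trapped l r k).image fun k => l.getD k 0

/-- The `r`-antigravity bound `b_r = Σ_{j ∈ Supp(a_r(l))} λ_j`. -/
noncomputable def agBound (Λ : ℤ →₀ ℕ) (l : List ℤ) (r : ℕ) : ℕ :=
  ∑ j ∈ trappedRunners l r, Λ j


/-!
Induct on the position of the dotted strand `t`, for all words at once. A strand to the left of `t`
that antigravity does not trap can be moved past `t`, which lowers the position of `t`. Otherwise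
all letters to the left of `t` lie in the support `S`. Put `N = ∑ j ∈ S, Λ j` and let `x` be the dot
on `t`. By induction `x ^ N` vanishes on every word over `S` in which `t` stands further to the
left, and the relations spread this vanishing: `x ^ N = 0` as soon as the part of the word to the
left of `t` is not, up to exchanging distant letters, the concatenation of two descents
`…, t - 2, t - 1` and `…, t + 2, t + 1`. If both descents are empty, the cyclotomic relation
applies. Otherwise the last letter `s` before `t` is adjacent to `t`. By induction the letters of
`S` on the side of `s` bound the dot on `s`, and the remaining ones bound the dot on `t` once `s`
and `t` are exchanged. Since `δ²` is the sum of the dots on `s` and `t`, the two bounds add up to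
`N`.
-/

/-! ### Complete homogeneous polynomials in two ring elements -/

/-- The complete homogeneous polynomial `h_{n-1}(a, b) = (a ^ n - b ^ n) / (a - b)`: the form in
which the vanishing of `a ^ n` passes through crossings. -/
def homog {R : Type*} [Ring R] (n : ℕ) (a b : R) : R :=
  ∑ i ∈ Finset.range n, a ^ i * b ^ (n - 1 - i)

section Homog

variable {R : Type*} [Ring R] {a b d e : R}

theorem semiconjBy_homog {a' b' : R} (ha : SemiconjBy d a a') (hb : SemiconjBy d b b') (n : ℕ) :
    SemiconjBy d (homog n a b) (homog n a' b') := by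
  simp only [homog, SemiconjBy, Finset.mul_sum, Finset.sum_mul]
  exact Finset.sum_congr rfl fun i _ => ((ha.pow_right i).mul_right (hb.pow_right _)).eq

theorem commute_homog (ha : Commute d a) (hb : Commute d b) (n : ℕ) : Commute d (homog n a b) :=
  semiconjBy_homog ha hb n

theorem homog_mul_sub (h : Commute a b) (n : ℕ) : homog n a b * (a - b) = a ^ n - b ^ n :=
  h.geom_sum₂_mul n

theorem homog_succ (h : Commute a b) (n : ℕ) : homog (n + 1) a b = a ^ n + b * homog n a b :=
  h.geom_sum₂_succ_eq

theorem mul_pow_of_mul_eq (hab : Commute a b) (hae : Commute a e) (h : d * a = b * d + e) (n : ℕ) :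
    d * a ^ n = b ^ n * d + homog n a b * e := by
  induction n with
  | zero => simp [homog]
  | succ n ih =>
    have he : Commute (a ^ n) e := hae.pow_left n
    calc d * a ^ (n + 1) = (b * d + e) * a ^ n := by rw [pow_succ', ← mul_assoc, h]
      _ = b * (b ^ n * d + homog n a b * e) + a ^ n * e := by
        rw [add_mul, mul_assoc, ih, he.eq]
      _ = b ^ (n + 1) * d + homog (n + 1) a b * e := by
        rw [homog_succ hab, pow_succ']
        noncomm_ring

/-- Here `d` plays the role of a crossing of two equal strands carrying the dots `a` and `b`. -/
theorem homog_mul_eq_zero (hab : Commute a b) (hae : Commute a e) (hed : e * d = d)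
    (h : d * a - b * d = e) (hdd : d * d = 0) {n : ℕ} (hz : a ^ n * e = 0) :
    homog n a b * e = 0 := by
  have hd : homog n a b * d = 0 :=
    calc homog n a b * d = b ^ n * (d * d) + homog n a b * e * d := by
          rw [hdd, mul_zero, zero_add, mul_assoc, hed]
      _ = d * a ^ n * d := by
        rw [mul_pow_of_mul_eq hab hae (sub_eq_iff_eq_add'.1 h), add_mul, mul_assoc (b ^ n)]
      _ = 0 := by rw [← hed, mul_assoc, ← mul_assoc (a ^ n), hz, zero_mul, mul_zero]
  have hb : Commute b (homog n a b) := commute_homog hab.symm (Commute.refl b) n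
  rw [← h, mul_sub, ← mul_assoc, hd, ← mul_assoc, ← hb.eq, mul_assoc, hd, zero_mul, mul_zero,
    sub_zero]

theorem pow_add_mul_eq_zero (hab : Commute a b) {n₁ n₂ : ℕ} (hb : b ^ n₂ * (a + b) = 0)
    (ha : a ^ n₁ * e = 0) : b ^ (n₁ + n₂) * e = 0 := by
  have hdvd : (b + a) * homog n₁ b (-a) = b ^ n₁ - (-a) ^ n₁ := by
    simpa [homog] using hab.symm.neg_right.mul_geom_sum₂ n₁
  have hpow : b ^ n₂ * b ^ n₁ = b ^ n₂ * (-a) ^ n₁ := by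
    rw [← sub_eq_zero, ← mul_sub, ← hdvd, ← mul_assoc, add_comm b a, hb, zero_mul]
  rw [add_comm, pow_add, hpow, neg_pow, mul_assoc, mul_assoc, ha, mul_zero, mul_zero]

end Homog

/-! ### Exchanging neighbouring letters of a word -/

/-- `l'` is obtained from `l` by exchanging the letters `p` and `q`, which `l` carries at
positions `k` and `k + 1`: the action of the crossing `δ_k` on words. The pointwise form lets
swaps of overlapping letters be compared. -/
structure IsSwapAt {I : Type*} (k : ℕ) (p q : I) (l l' : List I) : Prop where
  left : l[k]? = some p
  right : l[k + 1]? = some q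
  left' : l'[k]? = some q
  right' : l'[k + 1]? = some p
  eq_of_ne : ∀ j, j ≠ k → j ≠ k + 1 → l'[j]? = l[j]?

namespace IsSwapAt

variable {I : Type*} {k : ℕ} {p q : I} {l l' : List I}

theorem symm (h : IsSwapAt k p q l l') : IsSwapAt k q p l' l :=
  ⟨h.left', h.right', h.left, h.right, fun j h₁ h₂ => (h.eq_of_ne j h₁ h₂).symm⟩

theorem succ_lt_length (h : IsSwapAt k p q l l') : k + 1 < l.length :=
  (List.getElem?_eq_some_iff.1 h.right).1

theorem length_eq (h : IsSwapAt k p q l l') : l'.length = l.length := by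
  have key {p q : I} {l l' : List I} (h : IsSwapAt k p q l l') : l'.length ≤ l.length := by
    by_contra! hlt
    have hk := h.succ_lt_length
    simpa [hlt] using h.eq_of_ne l.length (by lia) (by lia)
  exact le_antisymm (key h) (key h.symm)

theorem append (u c v : List I) (p q : I) :
    IsSwapAt (u.length + c.length) p q (u ++ (c ++ p :: q :: v)) (u ++ (c ++ q :: p :: v)) := by
  refine ⟨by simp, by simp [add_assoc], by simp, by simp [add_assoc], fun j h₁ h₂ => ?_⟩
  rw [← List.append_assoc, ← List.append_assoc]
  rcases lt_or_ge j (u ++ c).length with hj | hj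
  · rw [List.getElem?_append_left hj, List.getElem?_append_left hj]
  · rw [List.getElem?_append_right hj, List.getElem?_append_right hj]
    obtain ⟨i, hi⟩ : ∃ i, j - (u ++ c).length = i + 2 := ⟨j - (u ++ c).length - 2, by grind⟩
    rw [hi, List.getElem?_cons_succ, List.getElem?_cons_succ, List.getElem?_cons_succ,
      List.getElem?_cons_succ]

variable {t s : I} {l₁ l₂ : List I}

theorem stack_right (h₁ : IsSwapAt k t s l l₁) (h₂ : IsSwapAt (k + 1) s t l l₂) :
    IsSwapAt (k + 1) t t l₁ l₁ :=
  have h : l₁[k + 1 + 1]? = some t := by rw [h₁.eq_of_ne _ (by lia) (by lia), h₂.right]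
  ⟨h₁.right', h, h₁.right', h, fun _ _ _ => rfl⟩

theorem stack_left (h₁ : IsSwapAt k t s l l₁) (h₂ : IsSwapAt (k + 1) s t l l₂) :
    IsSwapAt k t t l₂ l₂ :=
  have h : l₂[k]? = some t := by rw [h₂.eq_of_ne _ (by lia) (by lia), h₁.left]
  ⟨h, h₂.left', h, h₂.left', fun _ _ _ => rfl⟩

end IsSwapAt

/-- The list `l` of length `m` as a sequence of vertices, the index type used by `KLR`. -/
def word {I : Type*} {m : ℕ} (l : List I) (h : l.length = m) : Fin m → I :=
  fun k => l[k]

theorem word_ofFn {I : Type*} {m : ℕ} (q : Fin m → I) :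
    word (List.ofFn q) List.length_ofFn = q := by
  ext k
  simp [word]

theorem some_word {I : Type*} {m : ℕ} {l : List I} (hl : l.length = m) (k : Fin m) :
    some (word l hl k) = l[k.val]? := by
  simp [word]

theorem IsSwapAt.swapSeq_word {I : Type} {m k : ℕ} {p q : I} {l l' : List I}
    (h : IsSwapAt k p q l l') (hl : l.length = m) :
    swapSeq k (word l hl) = word l' (h.length_eq.trans hl) := by
  have hk : k + 1 < m := hl ▸ h.succ_lt_length
  funext j
  apply Option.some_injective
  rw [swapSeq, dif_pos hk, some_word, some_word]
  rcases eq_or_ne j ⟨k, by lia⟩ with rfl | h₁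
  · rw [Equiv.swap_apply_left]
    exact h.right.trans h.left'.symm
  rcases eq_or_ne j ⟨k + 1, hk⟩ with rfl | h₂
  · rw [Equiv.swap_apply_right]
    exact h.left.trans h.right'.symm
  rw [Equiv.swap_apply_of_ne_of_ne h₁ h₂]
  exact (h.eq_of_ne j (Fin.val_ne_of_ne h₁) (Fin.val_ne_of_ne h₂)).symm

theorem word_eq_of_getElem? {I : Type*} {m k : ℕ} {p : I} {l : List I} (hl : l.length = m)
    (hk : k < m) (h : l[k]? = some p) : word l hl ⟨k, hk⟩ = p :=
  Option.some_injective _ ((some_word hl _).trans h)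

/-! ### The KLR relations on words -/

/-- Distinct and not adjacent: the strands `p` and `q` can be uncrossed freely. -/
def Far {I : Type*} (adj : I → I → Prop) (p q : I) : Prop :=
  p ≠ q ∧ ¬ adj p q

namespace KLR

variable {I : Type} [DecidableEq I] {adj : I → I → Prop} {m : ℕ} {A : Type} [Ring A]
  (K : KLR I adj m A)

/-- The idempotent `e(l)`, set to `0` for lists of the wrong length so that the relations hold
for all lists. -/
def idem (l : List I) : A :=
  if h : l.length = m then K.e (word l h) else 0

/-- The dot `x_{k,l}`, set to `0` for lists of the wrong length and positions out of range. -/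
def dot (k : ℕ) (l : List I) : A :=
  if h : l.length = m ∧ k < m then K.x ⟨k, h.2⟩ (word l h.1) else 0

/-- The crossing `δ_{k,l}`, set to `0` for lists of the wrong length. -/
def cross (k : ℕ) (l : List I) : A :=
  if h : l.length = m then K.δ k (word l h) else 0

variable {j k : ℕ} {p q t s : I} {l l' l₁ l₂ : List I}

theorem idem_of_length_eq (h : l.length = m) : K.idem l = K.e (word l h) :=
  dif_pos h

theorem dot_of_length_eq (h : l.length = m) (hk : k < m) : K.dot k l = K.x ⟨k, hk⟩ (word l h) :=
  dif_pos ⟨h, hk⟩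

theorem cross_of_length_eq (h : l.length = m) : K.cross k l = K.δ k (word l h) :=
  dif_pos h

theorem idem_of_length_ne (h : l.length ≠ m) : K.idem l = 0 :=
  dif_neg h

theorem dot_of_length_ne (h : l.length ≠ m) : K.dot k l = 0 :=
  dif_neg fun h' => h h'.1

theorem dot_of_le (hk : m ≤ k) : K.dot k l = 0 :=
  dif_neg fun h => hk.not_gt h.2

theorem cross_of_length_ne (h : l.length ≠ m) : K.cross k l = 0 :=
  dif_neg h

theorem idem_mul_dot (k : ℕ) (l : List I) : K.idem l * K.dot k l = K.dot k l := by
  unfold idem dot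
  split_ifs with h₁ h₂ <;> simp_all [K.e_mul_x]

theorem dot_mul_idem (k : ℕ) (l : List I) : K.dot k l * K.idem l = K.dot k l := by
  unfold idem dot
  split_ifs with h₁ h₂ <;> simp_all [K.x_mul_e]

theorem commute_dot_dot (j k : ℕ) (l : List I) : Commute (K.dot j l) (K.dot k l) := by
  unfold dot
  split_ifs <;> first | exact K.x_mul_x .. | simp

theorem commute_dot_idem (k : ℕ) (l : List I) : Commute (K.dot k l) (K.idem l) :=
  (K.dot_mul_idem k l).trans (K.idem_mul_dot k l).symm

theorem cross_mul_idem (k : ℕ) (l : List I) : K.cross k l * K.idem l = K.cross k l := by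
  unfold cross idem
  split_ifs <;> simp [K.δ_mul_e]

theorem idem_mul_cross (h : IsSwapAt k p q l l') : K.idem l' * K.cross k l = K.cross k l := by
  by_cases hl : l.length = m
  · rw [K.idem_of_length_eq (h.length_eq.trans hl), K.cross_of_length_eq hl,
      ← h.swapSeq_word hl, K.e_mul_δ]
  · rw [K.cross_of_length_ne hl, mul_zero]

theorem cross_mul_cross_self (h : IsSwapAt k p p l l) : K.cross k l * K.cross k l = 0 := by
  by_cases hl : l.length = m
  · have hk : k + 1 < m := hl ▸ h.succ_lt_length
    have rel := K.δδ_same k hk (word l hl) (by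
      rw [word_eq_of_getElem? hl _ h.left, word_eq_of_getElem? hl _ h.right])
    rwa [h.swapSeq_word hl, ← K.cross_of_length_eq] at rel
  · rw [K.cross_of_length_ne hl, mul_zero]

theorem cross_mul_cross_of_far (h : IsSwapAt k p q l l') (hpq : Far adj p q) :
    K.cross k l' * K.cross k l = K.idem l := by
  by_cases hl : l.length = m
  · have hk : k + 1 < m := hl ▸ h.succ_lt_length
    have hp := word_eq_of_getElem? hl (Nat.lt_of_succ_lt hk) h.left
    have hq := word_eq_of_getElem? hl hk h.right
    have rel := K.δδ_orth k hk (word l hl) (by rw [hp, hq]; exact hpq.1)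
      (by rw [hp, hq]; exact hpq.2)
    rwa [h.swapSeq_word hl, ← K.cross_of_length_eq, ← K.cross_of_length_eq,
      ← K.idem_of_length_eq] at rel
  · rw [K.cross_of_length_ne hl, K.idem_of_length_ne hl, mul_zero]

theorem cross_mul_cross_of_adj (h : IsSwapAt k p q l l') (hpq : adj p q) :
    K.cross k l' * K.cross k l = K.dot k l + K.dot (k + 1) l := by
  by_cases hl : l.length = m
  · have hk : k + 1 < m := hl ▸ h.succ_lt_length
    have rel := K.δδ_adj k hk (word l hl) (by
      rwa [word_eq_of_getElem? hl _ h.left, word_eq_of_getElem? hl _ h.right])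
    rwa [h.swapSeq_word hl, ← K.cross_of_length_eq, ← K.cross_of_length_eq,
      ← K.dot_of_length_eq, ← K.dot_of_length_eq] at rel
  · rw [K.cross_of_length_ne hl, K.dot_of_length_ne hl, K.dot_of_length_ne hl, mul_zero, add_zero]

theorem semiconjBy_cross_dot (h : IsSwapAt k p q l l') (h₁ : j ≠ k) (h₂ : j ≠ k + 1) :
    SemiconjBy (K.cross k l) (K.dot j l) (K.dot j l') := by
  by_cases hl : l.length = m
  · rcases lt_or_ge j m with hj | hj
    · have rel := K.δx_far k ⟨j, hj⟩ (word l hl) h₁ h₂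
      rwa [h.swapSeq_word hl, ← K.cross_of_length_eq, ← K.dot_of_length_eq,
        ← K.dot_of_length_eq] at rel
    · simp [K.dot_of_le hj]
  · simp [K.cross_of_length_ne hl]

theorem semiconjBy_cross_dot_left (h : IsSwapAt k p q l l') (hpq : p ≠ q) :
    SemiconjBy (K.cross k l) (K.dot k l) (K.dot (k + 1) l') := by
  by_cases hl : l.length = m
  · have hk : k + 1 < m := hl ▸ h.succ_lt_length
    have rel := K.δx_diff1 k hk (word l hl) (by
      rwa [word_eq_of_getElem? hl _ h.left, word_eq_of_getElem? hl _ h.right])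
    rwa [h.swapSeq_word hl, ← K.cross_of_length_eq, ← K.dot_of_length_eq,
      ← K.dot_of_length_eq] at rel
  · simp [K.cross_of_length_ne hl]

theorem semiconjBy_cross_dot_right (h : IsSwapAt k p q l l') (hpq : p ≠ q) :
    SemiconjBy (K.cross k l) (K.dot (k + 1) l) (K.dot k l') := by
  by_cases hl : l.length = m
  · have hk : k + 1 < m := hl ▸ h.succ_lt_length
    have rel := K.δx_diff2 k hk (word l hl) (by
      rwa [word_eq_of_getElem? hl _ h.left, word_eq_of_getElem? hl _ h.right])
    rwa [h.swapSeq_word hl, ← K.cross_of_length_eq, ← K.dot_of_length_eq,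
      ← K.dot_of_length_eq] at rel
  · simp [K.cross_of_length_ne hl]

theorem cross_mul_dot_sub_dot_mul_cross (h : IsSwapAt k p p l l) :
    K.cross k l * K.dot k l - K.dot (k + 1) l * K.cross k l = K.idem l := by
  by_cases hl : l.length = m
  · have hk : k + 1 < m := hl ▸ h.succ_lt_length
    have rel := K.δx_same1 k hk (word l hl) (by
      rw [word_eq_of_getElem? hl _ h.left, word_eq_of_getElem? hl _ h.right])
    rwa [h.swapSeq_word hl, ← K.cross_of_length_eq, ← K.dot_of_length_eq,
      ← K.dot_of_length_eq, ← K.idem_of_length_eq] at rel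
  · simp [K.cross_of_length_ne hl, K.idem_of_length_ne hl]

theorem dot_mul_cross_sub_cross_mul_dot (h : IsSwapAt k p p l l) :
    K.dot k l * K.cross k l - K.cross k l * K.dot (k + 1) l = K.idem l := by
  by_cases hl : l.length = m
  · have hk : k + 1 < m := hl ▸ h.succ_lt_length
    have rel := K.δx_same2 k hk (word l hl) (by
      rw [word_eq_of_getElem? hl _ h.left, word_eq_of_getElem? hl _ h.right])
    rwa [h.swapSeq_word hl, ← K.cross_of_length_eq, ← K.dot_of_length_eq,
      ← K.dot_of_length_eq, ← K.idem_of_length_eq] at rel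
  · simp [K.cross_of_length_ne hl, K.idem_of_length_ne hl]

theorem cross_braid_sub_cross_braid (h₁ : IsSwapAt k t s l l₁) (h₂ : IsSwapAt (k + 1) s t l l₂)
    (hts : adj t s) :
    K.cross k l₁ * K.cross (k + 1) l₁ * K.cross k l -
      K.cross (k + 1) l₂ * K.cross k l₂ * K.cross (k + 1) l = K.idem l := by
  by_cases hl : l.length = m
  · have hk : k + 2 < m := hl ▸ h₂.succ_lt_length
    have h₀ := word_eq_of_getElem? hl (by lia) h₁.left
    have rel := K.braid_hard k hk (word l hl)
      (by rw [h₀, word_eq_of_getElem? hl hk h₂.right])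
      (by rwa [h₀, word_eq_of_getElem? hl _ h₁.right])
    rwa [h₁.swapSeq_word hl, h₂.swapSeq_word hl, (h₁.stack_right h₂).swapSeq_word,
      (h₁.stack_left h₂).swapSeq_word, ← K.cross_of_length_eq, ← K.cross_of_length_eq,
      ← K.cross_of_length_eq, ← K.cross_of_length_eq, ← K.cross_of_length_eq,
      ← K.cross_of_length_eq, ← K.idem_of_length_eq] at rel
  · simp [K.cross_of_length_ne hl, K.idem_of_length_ne hl]

end KLR

/-! ### Transporting nilpotency through crossings -/

namespace KLR

variable {I : Type} [DecidableEq I] {adj : I → I → Prop} {m : ℕ} {A : Type} [Ring A]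
  {K : KLR I adj m A} {j k : ℕ} {p q t s b : I} {l l' l₁ l₂ : List I} {x x' : A}

theorem mul_cross_eq_zero (hx : SemiconjBy (K.cross k l) x x') (hz : x * K.idem l = 0) :
    x' * K.cross k l = 0 := by
  rw [← K.cross_mul_idem, ← mul_assoc, ← hx.eq, mul_assoc, hz, mul_zero]

theorem mul_idem_eq_zero_of_far (h : IsSwapAt k p q l l') (hpq : Far adj p q)
    (hx : SemiconjBy (K.cross k l') x' x) (hz : x' * K.idem l' = 0) : x * K.idem l = 0 := by
  rw [← K.cross_mul_cross_of_far h hpq, ← mul_assoc, mul_cross_eq_zero hx hz, zero_mul]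

theorem mul_dot_add_dot_eq_zero (h : IsSwapAt k p q l l') (hpq : adj p q)
    (hx : SemiconjBy (K.cross k l') x' x) (hz : x' * K.idem l' = 0) :
    x * (K.dot k l + K.dot (k + 1) l) = 0 := by
  rw [← K.cross_mul_cross_of_adj h hpq, ← mul_assoc, mul_cross_eq_zero hx hz, zero_mul]

theorem mul_idem_eq_zero_of_braid (h₁ : IsSwapAt k t s l l₁) (h₂ : IsSwapAt (k + 1) s t l l₂)
    (hts : adj t s) {x₁ x₂ : A} (hx₁ : SemiconjBy (K.cross k l₁) x₁ x)
    (hx₂ : SemiconjBy (K.cross (k + 1) l₂) x₂ x) (hz₁ : x₁ * K.idem l₁ = 0)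
    (hz₂ : x₂ * K.idem l₂ = 0) : x * K.idem l = 0 := by
  rw [← K.cross_braid_sub_cross_braid h₁ h₂ hts, mul_sub]
  simp only [← mul_assoc, mul_cross_eq_zero hx₁ hz₁, mul_cross_eq_zero hx₂ hz₂, zero_mul, sub_zero]

variable (K) in
/-- The bound `N` on the nilpotency degree of the dot `x_{k,l}`. -/
def DotPowEqZero (N k : ℕ) (l : List I) : Prop :=
  K.dot k l ^ N * K.idem l = 0

variable (K) in
/-- The identity `h_{N-1}(x_j, x_k) = 0` on `l`, which lets `x_j ^ N = 0` and `x_k ^ N = 0` be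
exchanged. -/
def HomogEqZero (N j k : ℕ) (l : List I) : Prop :=
  homog N (K.dot j l) (K.dot k l) * K.idem l = 0

variable {N N₁ N₂ : ℕ}

theorem dotPowEqZero_of_length_ne (h : l.length ≠ m) : K.DotPowEqZero N k l := by
  rw [DotPowEqZero, K.idem_of_length_ne h, mul_zero]

theorem dotPowEqZero_ofFn_iff {q : Fin m → I} {r : Fin m} :
    K.DotPowEqZero N r (List.ofFn q) ↔ K.x r q ^ N * K.e q = 0 := by
  rw [DotPowEqZero, K.dot_of_length_eq List.length_ofFn r.isLt,
    K.idem_of_length_eq List.length_ofFn, word_ofFn]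

namespace DotPowEqZero

theorem mono (hN : N₁ ≤ N₂) (h : K.DotPowEqZero N₁ k l) : K.DotPowEqZero N₂ k l := by
  rw [DotPowEqZero, ← Nat.sub_add_cancel hN, pow_add, mul_assoc, h, mul_zero]

theorem swap (h : IsSwapAt k p q l l') (hpq : Far adj p q) (h₁ : j ≠ k) (h₂ : j ≠ k + 1)
    (hz : K.DotPowEqZero N j l') : K.DotPowEqZero N j l :=
  mul_idem_eq_zero_of_far h hpq ((K.semiconjBy_cross_dot h.symm h₁ h₂).pow_right N) hz

theorem swap_succ (h : IsSwapAt k p q l l') (hpq : Far adj p q)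
    (hz : K.DotPowEqZero N k l') : K.DotPowEqZero N (k + 1) l :=
  mul_idem_eq_zero_of_far h hpq
    ((K.semiconjBy_cross_dot_left h.symm hpq.1.symm).pow_right N) hz

theorem braid (h₁ : IsSwapAt k t s l l₁) (h₂ : IsSwapAt (k + 1) s t l l₂) (hts : adj t s)
    (hj : k + 2 < j) (hz₁ : K.DotPowEqZero N j l₁) (hz₂ : K.DotPowEqZero N j l₂) :
    K.DotPowEqZero N j l :=
  mul_idem_eq_zero_of_braid h₁ h₂ hts
    ((K.semiconjBy_cross_dot h₁.symm (by lia) (by lia)).pow_right N)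
    ((K.semiconjBy_cross_dot h₂.symm (by lia) (by lia)).pow_right N) hz₁ hz₂

theorem homogEqZero_stack (h : IsSwapAt k p p l l) (hz : K.DotPowEqZero N k l) :
    K.HomogEqZero N k (k + 1) l :=
  homog_mul_eq_zero (K.commute_dot_dot _ _ l) (K.commute_dot_idem k l) (K.idem_mul_cross h)
    (K.cross_mul_dot_sub_dot_mul_cross h) (K.cross_mul_cross_self h) hz

theorem of_homogEqZero (hz : K.DotPowEqZero N j l) (h : K.HomogEqZero N j k l) :
    K.DotPowEqZero N k l := by
  have hc := (K.commute_dot_idem j l).sub_left (K.commute_dot_idem k l)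
  have key : (K.dot j l ^ N - K.dot k l ^ N) * K.idem l = 0 := by
    rw [← homog_mul_sub (K.commute_dot_dot j k l), mul_assoc, hc.eq, ← mul_assoc, h, zero_mul]
  rwa [sub_mul, hz, zero_sub, neg_eq_zero] at key

theorem stack (h : IsSwapAt k p p l l) (hz : K.DotPowEqZero N k l) :
    K.DotPowEqZero N (k + 1) l :=
  hz.of_homogEqZero (hz.homogEqZero_stack h)

theorem mul_dot_add_dot (h : IsSwapAt k s t l l') (hst : adj s t) (hne : s ≠ t)
    (hz : K.DotPowEqZero N k l') : K.dot (k + 1) l ^ N * (K.dot k l + K.dot (k + 1) l) = 0 :=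
  mul_dot_add_dot_eq_zero h hst ((K.semiconjBy_cross_dot_left h.symm hne.symm).pow_right N) hz

theorem split [Std.Irrefl adj] (h : IsSwapAt k s t l l') (hst : adj s t)
    (hs : K.DotPowEqZero N₁ k l) (ht : K.DotPowEqZero N₂ k l') :
    K.DotPowEqZero (N₁ + N₂) (k + 1) l :=
  pow_add_mul_eq_zero (K.commute_dot_dot _ _ l)
    (ht.mul_dot_add_dot h hst (ne_of_irrefl hst)) hs

end DotPowEqZero

/-- If `x_{k+1}` acts on `x_j ^ N` as an element commuting with the crossing of the two equal
strands `k` and `k + 1`, then that crossing is killed by `x_j ^ N`, and with it `e(l)`. -/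
theorem dotPowEqZero_of_commute (h : IsSwapAt k p p l l) (hj : k + 1 < j)
    (hx : Commute (K.cross k l) (K.dot j l ^ N * K.dot (k + 1) l)) : K.DotPowEqZero N j l := by
  have hc : Commute (K.cross k l) (K.dot j l ^ N) :=
    (K.semiconjBy_cross_dot h (by lia) (by lia)).pow_right N
  have hcross : K.dot j l ^ N * K.cross k l = 0 :=
    calc K.dot j l ^ N * K.cross k l
        = K.dot j l ^ N * (K.idem l * K.cross k l) := by rw [K.idem_mul_cross h]
      _ = K.dot j l ^ N * K.dot k l * (K.cross k l * K.cross k l) -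
          K.dot j l ^ N * K.cross k l * K.dot (k + 1) l * K.cross k l := by
        rw [← K.dot_mul_cross_sub_cross_mul_dot h]
        noncomm_ring
      _ = -(K.dot j l ^ N * K.dot (k + 1) l * (K.cross k l * K.cross k l)) := by
        rw [← hc.eq, mul_assoc (K.cross k l), hx.eq, K.cross_mul_cross_self h]
        simp [mul_assoc, K.cross_mul_cross_self h]
      _ = 0 := by rw [K.cross_mul_cross_self h, mul_zero, neg_zero]
  have hdot : Commute (K.dot j l ^ N) (K.dot (k + 1) l) := (K.commute_dot_dot ..).pow_left N
  rw [DotPowEqZero, ← K.cross_mul_dot_sub_dot_mul_cross h, mul_sub, ← mul_assoc, hcross,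
    ← mul_assoc, hdot.eq, mul_assoc, hcross, zero_mul, mul_zero, sub_zero]

namespace HomogEqZero

variable [Std.Irrefl adj]

theorem tst (h₁ : IsSwapAt k t s l l₁) (h₂ : IsSwapAt (k + 1) s t l l₂) (hts : adj t s)
    (hz₁ : K.DotPowEqZero N (k + 1) l₁) (hz₂ : K.DotPowEqZero N k l₂) :
    K.HomogEqZero N k (k + 2) l :=
  have hne : t ≠ s := ne_of_irrefl hts
  mul_idem_eq_zero_of_braid h₁ h₂ hts
    (semiconjBy_homog (K.semiconjBy_cross_dot_right h₁.symm hne.symm)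
      (K.semiconjBy_cross_dot h₁.symm (by lia) (by lia)) N)
    (semiconjBy_homog (K.semiconjBy_cross_dot h₂.symm (by lia) (by lia))
      (K.semiconjBy_cross_dot_left h₂.symm hne) N)
    (hz₁.homogEqZero_stack (h₁.stack_right h₂)) (hz₂.homogEqZero_stack (h₁.stack_left h₂))

theorem mul_dot_add_dot_last (h : IsSwapAt k b t l l') (hbt : adj b t) (hj : j < k)
    (hz : K.HomogEqZero N j k l') :
    homog N (K.dot j l) (K.dot (k + 1) l) * (K.dot k l + K.dot (k + 1) l) = 0 :=
  mul_dot_add_dot_eq_zero h hbt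
    (semiconjBy_homog (K.semiconjBy_cross_dot h.symm (by lia) (by lia))
      (K.semiconjBy_cross_dot_left h.symm (ne_of_irrefl hbt).symm) N) hz

theorem mul_dot_add_dot_first (h : IsSwapAt k t b l l') (htb : adj t b) (hj : k + 1 < j)
    (hz : K.HomogEqZero N (k + 1) j l') :
    homog N (K.dot k l) (K.dot j l) * (K.dot k l + K.dot (k + 1) l) = 0 :=
  mul_dot_add_dot_eq_zero h htb
    (semiconjBy_homog (K.semiconjBy_cross_dot_right h.symm (ne_of_irrefl htb).symm)
      (K.semiconjBy_cross_dot h.symm (by lia) (by lia)) N) hz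

end HomogEqZero

theorem DotPowEqZero.square [Std.Irrefl adj] [Std.Symm adj] {a : I} {lR lM lL : List I}
    (hR : IsSwapAt (k + 2) b t l lR) (hM : IsSwapAt (k + 1) a b l lM)
    (hL : IsSwapAt k t b lM lL) (htb : adj t b) (hab : Far adj a b)
    (hzR : K.HomogEqZero N k (k + 2) lR) (hzL : K.HomogEqZero N (k + 1) (k + 3) lL)
    (hz : K.DotPowEqZero N k l) : K.DotPowEqZero N (k + 3) l := by
  have hlast := hzR.mul_dot_add_dot_last hR (symm_of adj htb) (by lia)
  have hfirst := hzL.mul_dot_add_dot_first hL htb (by lia)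
  have hsemi₀ := K.semiconjBy_cross_dot hM.symm (j := k) (by lia) (by lia)
  have hsemi₃ := K.semiconjBy_cross_dot hM.symm (j := k + 3) (by lia) (by lia)
  have hsemi₁ := K.semiconjBy_cross_dot_left hM.symm hab.1.symm
  have hmid := mul_idem_eq_zero_of_far hM hab
    ((semiconjBy_homog hsemi₀ hsemi₃ N).mul_right (hsemi₀.add_right hsemi₁))
    (by rw [hfirst, zero_mul])
  have hsub : homog N (K.dot k l) (K.dot (k + 3) l) * (K.dot k l - K.dot (k + 3) l) *
      K.idem l = 0 := by
    rw [← add_sub_add_right_eq_sub _ _ (K.dot (k + 2) l), mul_sub, sub_mul, hmid,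
      add_comm (K.dot (k + 3) l), hlast, zero_mul, sub_zero]
  rwa [homog_mul_sub (K.commute_dot_dot ..), sub_mul, hz, zero_sub, neg_eq_zero] at hsub

end KLR

/-! ### Forbidden suffixes -/

namespace KLR

variable {I : Type} [DecidableEq I] {adj : I → I → Prop} {m : ℕ} {A : Type} [Ring A]
  {K : KLR I adj m A} {N j : ℕ} {S : Set I} {t p q s a b : I} {z u v bs cs : List I}

namespace DotPowEqZero

theorem move_past (hb : ∀ c ∈ cs, Far adj b c) (hj : u.length + cs.length < j)
    (hz : K.DotPowEqZero N j (u ++ (cs ++ b :: z))) :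
    K.DotPowEqZero N j (u ++ b :: (cs ++ z)) := by
  induction cs generalizing u with
  | nil => exact hz
  | cons c cs ih =>
    rw [List.forall_mem_cons] at hb
    rw [List.length_cons] at hj
    refine DotPowEqZero.swap (.append u [] _ b c) hb.1 (by simp; lia) (by simp; lia) ?_
    simpa using ih (u := u ++ [c]) hb.2 (by simp; lia) (by simpa using hz)

theorem move_block_past (h : ∀ b ∈ bs, ∀ c ∈ cs, Far adj b c)
    (hj : u.length + bs.length + cs.length ≤ j)
    (hz : K.DotPowEqZero N j (u ++ (cs ++ (bs ++ z)))) :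
    K.DotPowEqZero N j (u ++ (bs ++ (cs ++ z))) := by
  induction bs generalizing u with
  | nil => exact hz
  | cons b bs ih =>
    rw [List.forall_mem_cons] at h
    rw [List.length_cons] at hj
    have hb : K.DotPowEqZero N j (u ++ b :: (cs ++ (bs ++ z))) :=
      hz.move_past h.1 (by lia)
    simpa using ih (u := u ++ [b]) h.2 (by simp; lia) (by simpa using hb)

end DotPowEqZero

variable (K N S t z) in
/-- If the letters of `w` lie in `S`, then `x ^ N = 0` for the dot `x` on the strand `t` of the
word `w t z`. -/
def Kills (w : List I) : Prop :=
  (∀ x ∈ w, x ∈ S) → K.DotPowEqZero N w.length (w ++ t :: z)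

variable (K N S t z) in
/-- The induction hypothesis: every word over `S` is killed when the strand `t` is at an earlier
position, that is, followed by a longer word than `z`. -/
def KillsEarlier : Prop :=
  ∀ w z', z.length < z'.length → K.Kills N S t z' w

variable (K N S t z) in
/-- Every word ending in `v` is killed. -/
def Forbidden (v : List I) : Prop :=
  ∀ u, K.Kills N S t z (u ++ v)

theorem kills_append_iff : K.Kills N S t z (u ++ v) ↔ (∀ x ∈ u, x ∈ S) → (∀ x ∈ v, x ∈ S) →
    K.DotPowEqZero N (u.length + v.length) (u ++ (v ++ t :: z)) := by
  simp [Kills, or_imp, forall_and]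

theorem Kills.move_block_past (h : ∀ b ∈ bs, ∀ c ∈ cs, Far adj b c)
    (hk : K.Kills N S t z (u ++ (cs ++ (bs ++ v)))) :
    K.Kills N S t z (u ++ (bs ++ (cs ++ v))) := by
  rw [kills_append_iff] at hk ⊢
  intro hu hv
  have hlen : (cs ++ (bs ++ v)).length = (bs ++ (cs ++ v)).length := by simp; lia
  rw [hlen] at hk
  have hj : u.length + bs.length + cs.length ≤ u.length + (bs ++ (cs ++ v)).length := by
    simp; lia
  simpa using DotPowEqZero.move_block_past (z := v ++ t :: z) h hj
    (by simpa using hk hu (by grind))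

namespace Forbidden

theorem append_left (a : List I) (h : K.Forbidden N S t z v) : K.Forbidden N S t z (a ++ v) :=
  fun u => List.append_assoc u a v ▸ h (u ++ a)

theorem cons (a : I) (h : K.Forbidden N S t z v) : K.Forbidden N S t z (a :: v) :=
  h.append_left [a]

theorem move_block_past (a : List I) (h : ∀ b ∈ bs, ∀ c ∈ cs, Far adj b c)
    (hk : K.Forbidden N S t z (a ++ (cs ++ (bs ++ v)))) :
    K.Forbidden N S t z (a ++ (bs ++ (cs ++ v))) := fun u => by
  rw [← List.append_assoc]
  exact Kills.move_block_past h (by simpa using hk u)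

theorem move_past (h : ∀ c ∈ cs, Far adj b c) (hk : K.Forbidden N S t z (cs ++ b :: v)) :
    K.Forbidden N S t z (b :: (cs ++ v)) :=
  hk.move_block_past (bs := [b]) [] (by simpa using h)

theorem braid (hpq : adj p q) (hqpp : K.Forbidden N S t z (q :: p :: p :: v))
    (hppq : K.Forbidden N S t z (p :: p :: q :: v)) : K.Forbidden N S t z (p :: q :: p :: v) := by
  intro u
  rw [kills_append_iff]
  intro hu hv
  exact DotPowEqZero.braid (.append u [] _ p q) (.append u [p] _ q p) hpq (by simp)
    (kills_append_iff.1 (hqpp u) hu (by grind)) (kills_append_iff.1 (hppq u) hu (by grind))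

end Forbidden

namespace KillsEarlier

variable (h : K.KillsEarlier N S t z)
include h

theorem forbidden_self : K.Forbidden N S t z [t] := by
  intro u
  rw [kills_append_iff]
  intro hu _
  exact DotPowEqZero.stack (.append u [] z t t) (h u (t :: z) (by simp) hu)

theorem forbidden_of_far (hq : Far adj q t) : K.Forbidden N S t z [q] := by
  intro u
  rw [kills_append_iff]
  intro hu _
  exact DotPowEqZero.swap_succ (.append u [] z q t) hq (h u (q :: z) (by simp) hu)

theorem forbidden_cons (hq : q = t ∨ Far adj q t) (hv : ∀ c ∈ v, Far adj q c) :
    K.Forbidden N S t z (q :: v) := by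
  have hq' : K.Forbidden N S t z [q] := by
    rcases hq with rfl | hq
    · exact h.forbidden_self
    · exact h.forbidden_of_far hq
  simpa using (hq'.append_left v).move_past hv

theorem homogEqZero [Std.Irrefl adj] (hts : adj t s) {z' : List I} (hz' : z.length ≤ z'.length)
    (hu : ∀ x ∈ u, x ∈ S) (hs : s ∈ S) :
    K.HomogEqZero N u.length (u.length + 2) (u ++ t :: s :: t :: z') := by
  have hust := h (u ++ [s]) (t :: z') (by simp; lia) (by grind)
  exact HomogEqZero.tst (.append u [] _ t s) (.append u [t] z' s t) hts
    (by simpa using hust) (h u (t :: s :: z') (by simp; lia) hu)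

theorem forbidden_pair [Std.Irrefl adj] (hts : adj t s) : K.Forbidden N S t z [t, s] := by
  intro u
  rw [kills_append_iff]
  intro hu hv
  exact (h u (s :: t :: z) (by simp) hu).of_homogEqZero
    (h.homogEqZero hts le_rfl hu (by simp_all))

theorem forbidden_triple [Std.Irrefl adj] [Std.Symm adj] (hta : adj t a) (htb : adj t b)
    (hab : Far adj a b) : K.Forbidden N S t z [t, a, b] := by
  intro u
  rw [kills_append_iff]
  intro hu hv
  have hright : K.HomogEqZero N u.length (u.length + 2) (u ++ t :: a :: t :: b :: z) :=
    h.homogEqZero hta (by simp) hu (by simp_all)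
  have hleft : K.HomogEqZero N (u.length + 1) (u.length + 3) (u ++ b :: t :: a :: t :: z) := by
    simpa using h.homogEqZero hta le_rfl (u := u ++ [b]) (by grind) (by simp_all)
  exact DotPowEqZero.square (.append u [t, a] z b t) (.append u [t] (t :: z) a b)
    (.append u [] _ t b) htb hab hright hleft (h u (a :: b :: t :: z) (by simp; lia) hu)

end KillsEarlier

variable (K N S t z) in
/-- On every word over `S` ending in `v`, the dot `y` on the first letter of `v` is, up to the
`N`-th power of the dot `x` on `t`, an integer multiple of `x`: `x ^ N y = c x ^ (N + 1)`. -/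
def ScalarDot (v : List I) : Prop :=
  ∀ u, (∀ x ∈ u, x ∈ S) → (∀ x ∈ v, x ∈ S) → ∃ c : ℤ,
    K.dot (u.length + v.length) (u ++ (v ++ t :: z)) ^ N * K.dot u.length (u ++ (v ++ t :: z)) =
      c • K.dot (u.length + v.length) (u ++ (v ++ t :: z)) ^ (N + 1)

theorem KillsEarlier.scalarDot [Std.Irrefl adj] (h : K.KillsEarlier N S t z) (hst : adj s t) :
    K.ScalarDot N S t z [s] := by
  intro u hu _
  have hsum := DotPowEqZero.mul_dot_add_dot (.append u [] z s t) hst (ne_of_irrefl hst)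
    (h u (s :: z) (by simp) hu)
  rw [mul_add, ← pow_succ, add_eq_zero_iff_eq_neg] at hsum
  exact ⟨-1, by simpa using hsum⟩

namespace ScalarDot

theorem exists_dot_succ (hv : K.ScalarDot N S t z v) (hu : ∀ x ∈ u, x ∈ S)
    (hpv : ∀ x ∈ p :: v, x ∈ S) : ∃ c : ℤ,
    K.dot (u.length + (p :: v).length) (u ++ (p :: v ++ t :: z)) ^ N *
        K.dot (u.length + 1) (u ++ (p :: v ++ t :: z)) =
      c • K.dot (u.length + (p :: v).length) (u ++ (p :: v ++ t :: z)) ^ (N + 1) := by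
  simpa [add_assoc, add_comm 1] using hv (u ++ [p]) (by grind) (by grind)

theorem cons (hpq : adj p q) (hk : K.Forbidden N S t z (q :: p :: v))
    (hv : K.ScalarDot N S t z (q :: v)) : K.ScalarDot N S t z (p :: q :: v) := by
  intro u hu hpqv
  obtain ⟨c, hc⟩ := hv.exists_dot_succ hu hpqv
  have hswap : IsSwapAt u.length p q (u ++ (p :: q :: v ++ t :: z))
      (u ++ (q :: p :: v ++ t :: z)) := .append u [] _ p q
  have hsum := mul_dot_add_dot_eq_zero hswap hpq
    ((K.semiconjBy_cross_dot hswap.symm (by simp) (by simp)).pow_right N)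
    (kills_append_iff.1 (hk u) hu (by grind))
  rw [mul_add, add_eq_zero_iff_eq_neg] at hsum
  exact ⟨-c, by rw [neg_smul, ← hc]; exact hsum⟩

theorem forbidden (hv : K.ScalarDot N S t z (p :: v)) : K.Forbidden N S t z (p :: p :: v) := by
  intro u
  rw [kills_append_iff]
  intro hu hppv
  obtain ⟨c, hc⟩ := hv.exists_dot_succ hu hppv
  have hswap : IsSwapAt u.length p p (u ++ (p :: p :: v ++ t :: z))
      (u ++ (p :: p :: v ++ t :: z)) := .append u [] _ p p
  refine dotPowEqZero_of_commute hswap (by simp) ?_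
  rw [hc]
  exact .smul_right ((K.semiconjBy_cross_dot hswap (by simp) (by simp)).pow_right (N + 1)) c

end ScalarDot

end KLR

/-! ### Descents in type `A_∞` -/

instance : Std.Symm adjZ := ⟨fun u v h => by unfold adjZ at *; lia⟩

instance : Std.Irrefl adjZ := ⟨fun u h => by simp [adjZ] at h⟩

theorem far_adjZ_iff {u v : ℤ} : Far adjZ u v ↔ 1 < (u - v).natAbs := by
  unfold Far adjZ
  lia

/-- The vertex of `ℤ` at distance `i` from `t`, to the left for `ε = 1` and to the right for
`ε = -1`. -/
def site (t : ℤ) (ε : ℤˣ) (i : ℕ) : ℤ := t - ε * i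

/-- The word `site (j - 1), …, site i` approaching `t` from one side; it is empty if `j ≤ i`. -/
def descent (t : ℤ) (ε : ℤˣ) (i j : ℕ) : List ℤ := ((List.Ico i j).map (site t ε)).reverse

section Sites

variable {t x y : ℤ} {ε : ℤˣ} {i j k : ℕ}

@[simp]
theorem site_zero : site t ε 0 = t := by simp [site]

theorem site_injective : Function.Injective (site t ε) := fun i j h => by
  simpa [site] using h

theorem site_sub_site : site t ε i - site t ε j = ε * (j - i) := by
  unfold site
  ring

theorem site_sub_site_neg : site t ε i - site t (-ε) j = -(ε * (i + j)) := by
  unfold site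
  push_cast
  ring

theorem natAbs_unit_mul (n : ℤ) : (ε * n : ℤ).natAbs = n.natAbs := by
  simp [Int.natAbs_mul]

theorem adjZ_site_succ_site : adjZ (site t ε (i + 1)) (site t ε i) := by
  rw [adjZ, site_sub_site, natAbs_unit_mul]
  lia

theorem adjZ_site_one : adjZ t (site t ε 1) := by
  simpa using symm (adjZ_site_succ_site (t := t) (ε := ε) (i := 0))

theorem far_site_site (h : i + 2 ≤ j ∨ j + 2 ≤ i) : Far adjZ (site t ε i) (site t ε j) := by
  rw [far_adjZ_iff, site_sub_site, natAbs_unit_mul]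
  lia

theorem far_site_site_neg (h : 2 ≤ i + j) : Far adjZ (site t ε i) (site t (-ε) j) := by
  rw [far_adjZ_iff, site_sub_site_neg, Int.natAbs_neg, natAbs_unit_mul]
  lia

theorem exists_eq_site (t x : ℤ) : ∃ ε i, x = site t ε i := by
  rcases le_total x t with h | h
  · exact ⟨1, (t - x).toNat, by simp [site, h]⟩
  · exact ⟨-1, (x - t).toNat, by simp [site, h]⟩

/-- `y` is strictly to the left of `t` for `ε = 1` and strictly to the right for `ε = -1`. It
separates the letters approaching `t` from the side of `site t ε 1` from all other letters. -/
def IsBeyond (t : ℤ) (ε : ℤˣ) (y : ℤ) : Prop := 0 < ε * (t - y)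

instance : DecidablePred (IsBeyond t ε) := fun _ => inferInstanceAs (Decidable (_ < _))

theorem isBeyond_site_one : IsBeyond t ε (site t ε 1) := by
  simp [IsBeyond, site]

theorem not_isBeyond_self : ¬ IsBeyond t ε t := by
  simp [IsBeyond]

theorem IsBeyond.of_not_far (hx : IsBeyond t ε x) (hyx : ¬ Far adjZ y x) (hy : y ≠ t) :
    IsBeyond t ε y := by
  rw [far_adjZ_iff] at hyx
  unfold IsBeyond at *
  rcases Int.units_eq_one_or ε with rfl | rfl <;> push_cast at * <;> lia

theorem IsBeyond.of_not_far_of_ne_site_one (hy : IsBeyond t ε y) (hyx : ¬ Far adjZ y x)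
    (hy' : y ≠ site t ε 1) : IsBeyond t ε x := by
  rw [far_adjZ_iff] at hyx
  unfold IsBeyond site at *
  rcases Int.units_eq_one_or ε with rfl | rfl <;> push_cast at * <;> lia

theorem mem_descent : x ∈ descent t ε i j ↔ ∃ k, (i ≤ k ∧ k < j) ∧ site t ε k = x := by
  simp [descent]

theorem ne_site_of_mem_descent (hx : x ∈ descent t ε i j) (hk : k < i) : x ≠ site t ε k := by
  obtain ⟨l, hl, rfl⟩ := mem_descent.1 hx
  exact site_injective.ne (by lia)

theorem ne_of_mem_descent (hx : x ∈ descent t ε i j) (hi : 0 < i) : x ≠ t := by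
  simpa using ne_site_of_mem_descent hx hi

theorem far_site_of_mem_descent (h : k + 2 ≤ i) (hx : x ∈ descent t ε i j) :
    Far adjZ (site t ε k) x := by
  obtain ⟨l, hl, rfl⟩ := mem_descent.1 hx
  exact far_site_site (.inl (by lia))

theorem far_site_of_mem_descent_neg (h : 2 ≤ k + i) (hx : x ∈ descent t (-ε) i j) :
    Far adjZ (site t ε k) x := by
  obtain ⟨l, hl, rfl⟩ := mem_descent.1 hx
  exact far_site_site_neg (by lia)

@[simp]
theorem descent_self : descent t ε i i = [] := by simp [descent]

theorem descent_succ (h : i ≤ j) : descent t ε i (j + 1) = site t ε j :: descent t ε i j := by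
  simp [descent, List.Ico.succ_top h]

theorem descent_append_descent (hij : i ≤ j) (hjk : j ≤ k) :
    descent t ε j k ++ descent t ε i j = descent t ε i k := by
  simp [descent, ← List.Ico.append_consecutive hij hjk]

theorem descent_append_singleton (h : i < j) :
    descent t ε (i + 1) j ++ [site t ε i] = descent t ε i j := by
  rw [← descent_append_descent i.le_succ h, descent_succ le_rfl, descent_self]

end Sites

namespace KLR

variable {m : ℕ} {A : Type} [Ring A] {K : KLR ℤ adjZ m A} {N : ℕ} {S : Set ℤ} {t : ℤ}
  {z : List ℤ}

namespace KillsEarlier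

variable (h : K.KillsEarlier N S t z) (ε : ℤˣ)
include h

theorem forbidden_site_cons_descent_of_le {i j : ℕ} (hi : 2 ≤ i) (hj : j < i) :
    K.Forbidden N S t z (site t ε i :: descent t ε 1 j) := by
  refine h.forbidden_cons (.inr ?_) fun c hc => ?_
  · simpa using far_site_site (t := t) (ε := ε) (j := 0) (.inr hi)
  · obtain ⟨k, hk, rfl⟩ := mem_descent.1 hc
    exact far_site_site (.inr (by lia))

theorem scalarDot_descent (n : ℕ) : K.ScalarDot N S t z (descent t ε 1 (n + 2)) := by
  induction n with
  | zero =>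
    rw [descent_succ le_rfl, descent_self]
    exact h.scalarDot (symm adjZ_site_one)
  | succ n ih =>
    rw [descent_succ (by lia), descent_succ (by lia)]
    rw [descent_succ (by lia)] at ih
    exact ih.cons adjZ_site_succ_site
      ((h.forbidden_site_cons_descent_of_le ε (by lia) (by lia)).cons _)

theorem forbidden_site_site_descent {i : ℕ} (hi : 1 ≤ i) :
    K.Forbidden N S t z (site t ε i :: site t ε i :: descent t ε 1 i) := by
  obtain ⟨n, rfl⟩ := Nat.exists_eq_add_of_le' hi
  refine ScalarDot.forbidden ?_
  rw [← descent_succ (by lia)]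
  exact h.scalarDot_descent ε n

theorem forbidden_site_cons_descent {i j : ℕ} (hi : 1 ≤ i) (hij : i ≠ j) (hj : 1 ≤ j) :
    K.Forbidden N S t z (site t ε i :: descent t ε 1 j) := by
  obtain hlt | rfl | hgt : j < i ∨ j = i + 1 ∨ i + 2 ≤ j := by lia
  · exact h.forbidden_site_cons_descent_of_le ε (by lia) hlt
  · rw [descent_succ hi]
    exact h.forbidden_site_site_descent ε hi
  · rw [← descent_append_descent (by lia) hgt, descent_succ (by lia), descent_succ hi]
    refine Forbidden.move_past (fun c => far_site_of_mem_descent le_rfl)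
      (.append_left _ (.braid ?_ ?_ ?_))
    · exact symm adjZ_site_succ_site
    · exact (h.forbidden_site_site_descent ε hi).cons _
    · exact ((h.forbidden_site_cons_descent_of_le ε (by lia) (by lia)).cons _).cons _

theorem forbidden_cons_descent (j : ℕ) : K.Forbidden N S t z (t :: descent t ε 1 (j + 1)) := by
  rcases j with _ | j
  · simpa using h.forbidden_self
  · rw [← descent_append_singleton (by lia)]
    refine Forbidden.move_past (fun c hc => ?_)
      (.append_left _ (h.forbidden_pair adjZ_site_one))
    simpa using far_site_of_mem_descent (k := 0) le_rfl hc

theorem forbidden_cons_descent_append_descent (i j : ℕ) :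
    K.Forbidden N S t z (t :: (descent t 1 1 (i + 1) ++ descent t (-1) 1 (j + 1))) := by
  rcases i with _ | i
  · simpa using h.forbidden_cons_descent (-1) j
  rcases j with _ | j
  · simpa using h.forbidden_cons_descent 1 (i + 1)
  rw [← descent_append_singleton (i := 1) (j := i + 1 + 1) (by lia),
    ← descent_append_singleton (i := 1) (j := j + 1 + 1) (by lia), List.append_assoc]
  refine Forbidden.move_past (fun c hc => ?_) (.append_left _ ?_)
  · simpa using far_site_of_mem_descent (k := 0) le_rfl hc
  refine Forbidden.move_block_past (bs := [t, site t 1 1]) [] (fun b hb c hc => ?_)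
    (.append_left _ (.append_left _ ?_))
  · obtain rfl | rfl : b = site t 1 0 ∨ b = site t 1 1 := by simpa using hb
    all_goals exact far_site_of_mem_descent_neg (by lia) hc
  · exact h.forbidden_triple adjZ_site_one adjZ_site_one (far_site_site_neg le_rfl)

/-- Reading a word from right to left, each letter either prolongs one of the two descents towards
`t` or makes the suffix read so far forbidden. -/
theorem kills_append_descents
    (hbase : ∀ i j, K.Kills N S t z (descent t 1 1 (i + 1) ++ descent t (-1) 1 (j + 1)))
    (w : List ℤ) (i j : ℕ) :
    K.Kills N S t z (w ++ (descent t 1 1 (i + 1) ++ descent t (-1) 1 (j + 1))) := by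
  induction w using List.reverseRecOn generalizing i j with
  | nil => exact hbase i j
  | append_singleton w y ih =>
    rw [List.append_assoc, List.singleton_append]
    obtain ⟨ε, k, rfl⟩ := exists_eq_site t y
    obtain rfl | hk : k = 0 ∨ 1 ≤ k := by lia
    · simpa using h.forbidden_cons_descent_append_descent i j w
    obtain rfl | rfl := Int.units_eq_one_or ε
    · obtain rfl | hki := eq_or_ne k (i + 1)
      · simpa [descent_succ] using ih (i + 1) j
      have hfar : ∀ b ∈ site t 1 k :: descent t 1 1 (i + 1), ∀ c ∈ descent t (-1) 1 (j + 1),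
          Far adjZ b c := by
        refine List.forall_mem_cons.2 ⟨fun c => far_site_of_mem_descent_neg (by lia), ?_⟩
        intro b hb c hc
        obtain ⟨l, hl, rfl⟩ := mem_descent.1 hb
        exact far_site_of_mem_descent_neg (by lia) hc
      have hside := (h.forbidden_site_cons_descent 1 hk hki (by lia)).append_left
        (descent t (-1) 1 (j + 1))
      simpa using Kills.move_block_past (v := []) hfar (by simpa using hside w)
    · have hfar : ∀ b ∈ [site t (-1) k], ∀ c ∈ descent t 1 1 (i + 1), Far adjZ b c := by
        intro b hb c hc
        obtain rfl := List.mem_singleton.1 hb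
        exact far_site_of_mem_descent_neg (i := 1) (by lia) hc
      refine Kills.move_block_past hfar ?_
      obtain rfl | hkj := eq_or_ne k (j + 1)
      · simpa [descent_succ] using ih i (j + 1)
      · exact (h.forbidden_site_cons_descent (-1) hk hkj (by lia)).append_left _ w

end KillsEarlier

end KLR

/-! ### The antigravity bound -/

section TrappedLetters

variable {I : Type} [DecidableEq I] {adj : I → I → Prop} {w w' : List I} {C S : Finset I}
  {y : I}

variable (adj) in
open Classical in
/-- The letters of `C` together with those letters of `w` that antigravity traps below `C`: reading
`w` from right to left, a letter is kept unless it is far from all letters collected so far. -/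
noncomputable def trappedLetters (w : List I) (C : Finset I) : Finset I :=
  w.foldr (fun y T => if ∀ x ∈ T, Far adj y x then T else insert y T) C

theorem trappedLetters_cons_of_far (h : ∀ x ∈ trappedLetters adj w C, Far adj y x) :
    trappedLetters adj (y :: w) C = trappedLetters adj w C :=
  if_pos h

theorem trappedLetters_cons_of_not_far (h : ¬ ∀ x ∈ trappedLetters adj w C, Far adj y x) :
    trappedLetters adj (y :: w) C = insert y (trappedLetters adj w C) :=
  if_neg h

theorem trappedLetters_subset_cons :
    trappedLetters adj w C ⊆ trappedLetters adj (y :: w) C := by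
  by_cases h : ∀ x ∈ trappedLetters adj w C, Far adj y x
  · rw [trappedLetters_cons_of_far h]
  · rw [trappedLetters_cons_of_not_far h]
    exact Finset.subset_insert _ _

theorem subset_trappedLetters : C ⊆ trappedLetters adj w C := by
  induction w with
  | nil => rfl
  | cons y w ih => exact ih.trans trappedLetters_subset_cons

theorem trappedLetters_cons_subset_cons
    (h : trappedLetters adj w C ⊆ trappedLetters adj w' C) :
    trappedLetters adj (y :: w) C ⊆ trappedLetters adj (y :: w') C := by
  by_cases hw : ∀ x ∈ trappedLetters adj w C, Far adj y x
  · rw [trappedLetters_cons_of_far hw]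
    exact h.trans trappedLetters_subset_cons
  · rw [trappedLetters_cons_of_not_far hw,
      trappedLetters_cons_of_not_far fun hw' => hw fun x hx => hw' x (h hx)]
    exact Finset.insert_subset_insert _ h

theorem trappedLetters_subset (hC : C ⊆ S) (hw : ∀ y ∈ w, ∀ x ∈ S, ¬ Far adj y x → y ∈ S) :
    trappedLetters adj w C ⊆ S := by
  induction w with
  | nil => exact hC
  | cons y w ih =>
    rw [List.forall_mem_cons] at hw
    by_cases h : ∀ x ∈ trappedLetters adj w C, Far adj y x
    · exact trappedLetters_cons_of_far h ▸ ih hw.2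
    · rw [trappedLetters_cons_of_not_far h, Finset.insert_subset_iff]
      push Not at h
      obtain ⟨x, hx, hyx⟩ := h
      exact ⟨hw.1 x (ih hw.2 hx) hyx, ih hw.2⟩

theorem forall_mem_trappedLetters_or_exists_far (w : List I) (C : Finset I) :
    (∀ x ∈ w, x ∈ trappedLetters adj w C) ∨
      ∃ u y v, w = u ++ y :: v ∧ (∀ x ∈ C, Far adj y x) ∧ (∀ x ∈ v, Far adj y x) ∧
        trappedLetters adj (u ++ v) C ⊆ trappedLetters adj w C := by
  induction w with
  | nil => exact .inl (by simp)
  | cons a w ih =>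
    rcases ih with hw | ⟨u, y, v, rfl, hyC, hyv, hsub⟩
    · by_cases h : ∀ x ∈ trappedLetters adj w C, Far adj a x
      · exact .inr ⟨[], a, w, rfl, fun x hx => h x (subset_trappedLetters hx),
          fun x hx => h x (hw x hx), trappedLetters_subset_cons⟩
      · rw [trappedLetters_cons_of_not_far h]
        exact .inl (by grind)
    · exact .inr ⟨a :: u, y, v, rfl, hyC, hyv, trappedLetters_cons_subset_cons hsub⟩

end TrappedLetters

namespace CycKLR

variable {m : ℕ} {A : Type} [Ring A] {Λ : ℤ →₀ ℕ} {K : CycKLR ℤ adjZ m A Λ} {S : Finset ℤ}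
  {t : ℤ} {w z : List ℤ}

variable (K) in
/-- The antigravity bound for every strand that is followed by at least `s` other strands. -/
def BoundHolds (s : ℕ) : Prop :=
  ∀ w t z (S : Finset ℤ), s ≤ z.length → trappedLetters adjZ w {t} ⊆ S →
    K.DotPowEqZero (∑ j ∈ S, Λ j) w.length (w ++ t :: z)

theorem dotPowEqZero_zero (t : ℤ) (z : List ℤ) : K.DotPowEqZero (Λ t) 0 (t :: z) := by
  by_cases h : (t :: z).length = m
  · have hm : 0 < m := by simp at h; lia
    rw [KLR.DotPowEqZero, KLR.dot_of_length_eq _ h hm, KLR.idem_of_length_eq _ h]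
    exact K.cyc hm (word (t :: z) h)
  · exact KLR.dotPowEqZero_of_length_ne h

namespace BoundHolds

variable (h : K.BoundHolds (z.length + 1)) (ht : t ∈ S)
include h ht

theorem killsEarlier : K.KillsEarlier (∑ j ∈ S, Λ j) S t z := fun w z' hz' hw =>
  h w t z' S hz' (trappedLetters_subset (by simpa) fun y hy _ _ _ => hw y hy)

/-- The letters of `S` on the side of the last letter `s` bound the dot on `s`, the remaining ones
bound the dot on `t`, and the relation for `δ²` identifies the two dots up to sign. -/
theorem kills_append_site_one (ε : ℤˣ) (hw : ∀ x ∈ w, x ≠ t ∧ x ≠ site t ε 1) :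
    K.Kills (∑ j ∈ S, Λ j) S t z (w ++ [site t ε 1]) := by
  rw [KLR.kills_append_iff]
  intro hwS hs
  have hbound (P : ℤ → Prop) [DecidablePred P] (x : ℤ) (z' : List ℤ) (hx : x ∈ S) (hPx : P x)
      (hP : ∀ y ∈ w, ∀ x, P x → ¬ Far adjZ y x → P y) (hz' : z.length < z'.length) :
      K.DotPowEqZero (∑ j ∈ S with P j, Λ j) w.length (w ++ x :: z') := by
    refine h w x z' _ hz' (trappedLetters_subset (by simp [hx, hPx]) fun y hy c hc hyc => ?_)
    rw [Finset.mem_filter] at hc ⊢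
    exact ⟨hwS y hy, hP y hy c hc.2 hyc⟩
  have hbeyond : K.DotPowEqZero (∑ j ∈ S with IsBeyond t ε j, Λ j) w.length
      (w ++ site t ε 1 :: t :: z) :=
    hbound _ _ _ (by simpa using hs) isBeyond_site_one
      (fun y hy x hx hyx => hx.of_not_far hyx (hw y hy).1) (by simp)
  have hnotBeyond : K.DotPowEqZero (∑ j ∈ S with ¬ IsBeyond t ε j, Λ j) w.length
      (w ++ t :: site t ε 1 :: z) :=
    hbound _ _ _ ht not_isBeyond_self
      (fun y hy x hx hyx hy' => hx (hy'.of_not_far_of_ne_site_one hyx (hw y hy).2)) (by simp)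
  rw [← Finset.sum_filter_add_sum_filter_not S (IsBeyond t ε)]
  exact KLR.DotPowEqZero.split (.append w [] z _ t) (symm adjZ_site_one) hbeyond hnotBeyond

theorem kills_descent_append_descent (i j : ℕ) :
    K.Kills (∑ j ∈ S, Λ j) S t z (descent t 1 1 (i + 1) ++ descent t (-1) 1 (j + 1)) := by
  rcases j with _ | j
  · rcases i with _ | i
    · have hle : Λ t ≤ ∑ j ∈ S, Λ j := Finset.single_le_sum (fun _ _ => Nat.zero_le _) ht
      exact fun _ => (dotPowEqZero_zero t z).mono hle
    · rw [← descent_append_singleton (by lia)]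
      simpa using h.kills_append_site_one ht 1 fun x (hx : x ∈ descent t 1 2 (i + 2)) =>
        ⟨ne_of_mem_descent hx two_pos, ne_site_of_mem_descent hx one_lt_two⟩
  · rw [← descent_append_singleton (i := 1) (j := j + 1 + 1) (by lia), ← List.append_assoc]
    refine h.kills_append_site_one ht (-1) fun x hx => ?_
    rcases List.mem_append.1 hx with hx | hx
    · exact ⟨ne_of_mem_descent hx one_pos,
        (far_site_of_mem_descent_neg (ε := -1) le_rfl (by simpa using hx)).1.symm⟩
    · exact ⟨ne_of_mem_descent hx two_pos, ne_site_of_mem_descent hx one_lt_two⟩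

end BoundHolds

theorem BoundHolds.of_succ {s : ℕ} (h : K.BoundHolds (s + 1)) : K.BoundHolds s := by
  intro w t z S hz hS
  obtain hlt | rfl : s < z.length ∨ s = z.length := by lia
  · exact h w t z S hlt hS
  rcases forall_mem_trappedLetters_or_exists_far (adj := adjZ) w {t} with
    hw | ⟨u, y, v, rfl, hyt, hyv, hsub⟩
  · have ht : t ∈ S := hS (subset_trappedLetters (by simp))
    simpa using (h.killsEarlier ht).kills_append_descents (h.kills_descent_append_descent ht) w 0 0
      fun x hx => hS (hw x (by simpa using hx))
  · have hmoved : K.DotPowEqZero (∑ j ∈ S, Λ j) (u ++ v).length ((u ++ v) ++ t :: y :: z) :=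
      h (u ++ v) t (y :: z) S (by simp) (hsub.trans hS)
    have hnext := KLR.DotPowEqZero.swap_succ (.append (u ++ v) [] z y t) (hyt t (by simp)) hmoved
    simpa using KLR.DotPowEqZero.move_past hyv (by simp) (by simpa [add_assoc] using hnext)

theorem boundHolds (K : CycKLR ℤ adjZ m A Λ) (s : ℕ) : K.BoundHolds s := by
  refine Nat.decreasingInduction' (fun _ _ _ => BoundHolds.of_succ) (le_max_left s m) ?_
  exact fun w t z S hz _ => KLR.dotPowEqZero_of_length_ne (by simp; lia)

end CycKLR

section TrappedRunners

variable {l : List ℤ} {x y : ℤ} {r k : ℕ}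

theorem Trapped.cons (h : Trapped l r k) : Trapped (y :: l) (r + 1) (k + 1) :=
  h.lift (· + 1) fun a b hab => by simpa [HeapRel] using hab

theorem mem_trappedRunners :
    x ∈ trappedRunners l r ↔ ∃ k < l.length, Trapped l r k ∧ l.getD k 0 = x := by
  simp [trappedRunners, and_assoc]

theorem trappedRunners_subset_cons : trappedRunners l r ⊆ trappedRunners (y :: l) (r + 1) := by
  intro x hx
  obtain ⟨k, hk, htr, rfl⟩ := mem_trappedRunners.1 hx
  exact mem_trappedRunners.2 ⟨k + 1, by simpa, htr.cons, by simp⟩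

theorem mem_trappedRunners_cons (hx : x ∈ trappedRunners l r) (hyx : ¬ Far adjZ y x) :
    y ∈ trappedRunners (y :: l) (r + 1) := by
  obtain ⟨k, hk, htr, rfl⟩ := mem_trappedRunners.1 hx
  rw [far_adjZ_iff, not_lt] at hyx
  have hrel : HeapRel (y :: l) 0 (k + 1) := ⟨by lia, by simpa, by simpa using hyx⟩
  exact mem_trappedRunners.2 ⟨0, by simp, .head hrel htr.cons, by simp⟩

theorem trappedLetters_subset_trappedRunners (w : List ℤ) (t : ℤ) (z : List ℤ) :
    trappedLetters adjZ w {t} ⊆ trappedRunners (w ++ t :: z) w.length := by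
  induction w with
  | nil => exact Finset.singleton_subset_iff.2 (mem_trappedRunners.2 ⟨0, by simp, .refl, by simp⟩)
  | cons y w ih =>
    have hsub := ih.trans (trappedRunners_subset_cons (y := y))
    by_cases h : ∀ x ∈ trappedLetters adjZ w {t}, Far adjZ y x
    · rwa [trappedLetters_cons_of_far h]
    · rw [trappedLetters_cons_of_not_far h, Finset.insert_subset_iff]
      push Not at h
      obtain ⟨x, hx, hyx⟩ := h
      exact ⟨mem_trappedRunners_cons (ih hx) hyx, hsub⟩

end TrappedRunners

theorem CycKLR.dotPowEqZero_agBound {m : ℕ} {A : Type} [Ring A] {Λ : ℤ →₀ ℕ}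
    (K : CycKLR ℤ adjZ m A Λ) (w : List ℤ) (t : ℤ) (z : List ℤ) :
    K.DotPowEqZero (agBound Λ (w ++ t :: z) w.length) w.length (w ++ t :: z) :=
  K.boundHolds z.length w t z _ le_rfl (trappedLetters_subset_trappedRunners w t z)

/-- Main theorem.  For `Γ` of type `A_∞`, `Λ = Σ λ_i·i` and
any sequence `i = i₁…i_m`, the nilpotency degree of `x_{r,i}` in the cyclotomic
quotient `R_ν^Λ` is at most the `r`-antigravity bound
`b_r = Σ_{j ∈ Supp(a_r(i))} λ_j`, i.e. `x_{r,i}^{b_r} = 0`. -/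
theorem antigravity_bound_nilpotency {m : ℕ} {A : Type} [Ring A] {Λ : ℤ →₀ ℕ}
    (K : CycKLR ℤ adjZ m A Λ) (q : Fin m → ℤ) (r : Fin m) :
    K.x r q ^ agBound Λ (List.ofFn q) r.val * K.e q = 0 := by
  have hr : r.val < (List.ofFn q).length := by simp
  have hq : (List.ofFn q).take r ++ (List.ofFn q)[r.val] :: (List.ofFn q).drop (r + 1) =
      List.ofFn q := by
    rw [← List.drop_eq_getElem_cons hr, List.take_append_drop]
  have hbound := K.dotPowEqZero_agBound ((List.ofFn q).take r) (List.ofFn q)[r.val]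
    ((List.ofFn q).drop (r + 1))
  rw [hq, List.length_take_of_le hr.le] at hbound
  exact KLR.dotPowEqZero_ofFn_iff.1 hbound

end KLRPaper
end

section
/- Let Λ ∈ ℕ[I] have level ℓ = Σ_i λ_i. Then x_{r,i}^ℓ = 0 in R_ν^Λ for every sequence i ∈ Seq(ν) and every 1 ≤ r ≤ m, for the quiver of type A_∞. -/
namespace KLRPaper


/-! The polynomials in the dots that vanish on an idempotent form an ideal. Name the beads once and
for all, and index these ideals by the order in which the beads are placed. The KLR relations let
membership pass between orders that differ by swapping two neighbouring beads: for free if their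
runners are orthogonal, at the cost of a factor `X a + X b` if the runners are adjacent. On equal
runners the ideal is closed under divided differences, and the hard braid relation gives membership
at `a w b` from membership at `a b w` and at `w a b`.

The exponent of a bead `u` is bounded by the total weight of the runners in use, by induction on the
number of beads placed no later than `u`. Beads that can be moved past `u` do not count. If a
neighbouring runner carries two beads, a divided difference removes the factor paid for moving one
of them past `u`; so at most one bead remains on each neighbouring runner. If an earlier bead `z`
lies on the runner of `u`, a divided difference passes the exponent of `z` on to `u`. Otherwise a
bead `w` on a neighbouring runner is swapped with `u`, and the factor `X w + X u` makes the exponent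
of `w` over the runners on its side add up with that of `u` over the remaining runners. -/
/-! ### Divided differences -/

section DivDiff

open MvPolynomial

variable {ν ν' R : Type*} [DecidableEq ν] [DecidableEq ν'] [CommRing R]

theorem X_sub_X_dvd_sub_rename_swap (a b : ν) (f : MvPolynomial ν R) :
    X a - X b ∣ f - rename (Equiv.swap a b) f := by
  induction f using MvPolynomial.induction_on with
  | C c => simp
  | add f g hf hg => simpa only [map_add, add_sub_add_comm] using dvd_add hf hg
  | mul_X f n hf =>
    have hn : (X a - X b : MvPolynomial ν R) ∣ X n - rename (Equiv.swap a b) (X n) := by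
      rw [rename_X]
      rcases eq_or_ne n a with rfl | hna
      · rw [Equiv.swap_apply_left]
      rcases eq_or_ne n b with rfl | hnb
      · exact ⟨-1, by rw [Equiv.swap_apply_right]; ring⟩
      · rw [Equiv.swap_apply_of_ne_of_ne hna hnb, sub_self]
        exact dvd_zero _
    rw [map_mul, show f * X n - rename (Equiv.swap a b) f * rename (Equiv.swap a b) (X n) =
      (f - rename (Equiv.swap a b) f) * X n +
        rename (Equiv.swap a b) f * (X n - rename (Equiv.swap a b) (X n)) by ring]
    exact dvd_add (hf.mul_right _) (hn.mul_left _)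

/-- The divided difference `(f - s f) / (X a - X b)`, where `s` exchanges the variables `a`
and `b`. Only meaningful for `a ≠ b`. -/
noncomputable def divDiff (a b : ν) (f : MvPolynomial ν R) : MvPolynomial ν R :=
  (X_sub_X_dvd_sub_rename_swap a b f).choose

theorem X_sub_X_mul_divDiff (a b : ν) (f : MvPolynomial ν R) :
    (X a - X b) * divDiff a b f = f - rename (Equiv.swap a b) f :=
  (X_sub_X_dvd_sub_rename_swap a b f).choose_spec.symm

variable [IsDomain R] {a b : ν}

theorem divDiff_eq_of_mul_eq (hab : a ≠ b) {f g : MvPolynomial ν R}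
    (hg : (X a - X b) * g = f - rename (Equiv.swap a b) f) : divDiff a b f = g :=
  mul_left_cancel₀ (sub_ne_zero.2 fun h => hab (X_injective h))
    ((X_sub_X_mul_divDiff a b f).trans hg.symm)

theorem divDiff_C (hab : a ≠ b) (c : R) : divDiff a b (C c) = 0 :=
  divDiff_eq_of_mul_eq hab (by simp)

theorem divDiff_X_left (hab : a ≠ b) : divDiff a b (X a : MvPolynomial ν R) = 1 :=
  divDiff_eq_of_mul_eq hab (by simp)

theorem divDiff_X_right (hab : a ≠ b) : divDiff a b (X b : MvPolynomial ν R) = -1 :=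
  divDiff_eq_of_mul_eq hab (by simp)

theorem divDiff_X_of_ne_of_ne (hab : a ≠ b) {n : ν} (hna : n ≠ a) (hnb : n ≠ b) :
    divDiff a b (X n : MvPolynomial ν R) = 0 :=
  divDiff_eq_of_mul_eq hab (by simp [Equiv.swap_apply_of_ne_of_ne hna hnb])

theorem divDiff_add (hab : a ≠ b) (f g : MvPolynomial ν R) :
    divDiff a b (f + g) = divDiff a b f + divDiff a b g :=
  divDiff_eq_of_mul_eq hab <| by
    rw [map_add]
    linear_combination X_sub_X_mul_divDiff a b f + X_sub_X_mul_divDiff a b g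

theorem divDiff_mul (hab : a ≠ b) (f g : MvPolynomial ν R) :
    divDiff a b (f * g) = rename (Equiv.swap a b) f * divDiff a b g + divDiff a b f * g :=
  divDiff_eq_of_mul_eq hab <| by
    rw [map_mul]
    linear_combination
      rename (Equiv.swap a b) f * X_sub_X_mul_divDiff a b g + g * X_sub_X_mul_divDiff a b f

theorem rename_divDiff (e : ν ≃ ν') (hab : a ≠ b) (f : MvPolynomial ν R) :
    rename e (divDiff a b f) = divDiff (e a) (e b) (rename e f) := by
  refine (divDiff_eq_of_mul_eq (e.injective.ne hab) ?_).symm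
  rw [rename_rename, e.injective.swap_comp, ← rename_rename, ← map_sub, ← X_sub_X_mul_divDiff,
    map_mul, map_sub, rename_X, rename_X]

end DivDiff

/-! ### Polynomials in the dots -/

section AevalOfCommute

open MvPolynomial
open scoped IsMulCommutative

variable {ν R A : Type*} [CommRing R] [Ring A] [Algebra R A] {y : ν → A}

/-- Evaluation of polynomials at a commuting family in a noncommutative algebra; `aeval` itself
requires a commutative target. -/
noncomputable def aevalOfCommute (R : Type*) [CommRing R] [Algebra R A] (y : ν → A)
    (hy : ∀ a b, Commute (y a) (y b)) : MvPolynomial ν R →ₐ[R] A :=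
  have : IsMulCommutative (Algebra.adjoin R (Set.range y)) :=
    Algebra.isMulCommutative_adjoin R <| by
      rintro _ ⟨a, rfl⟩ _ ⟨b, rfl⟩
      exact hy a b
  (Algebra.adjoin R (Set.range y)).val.comp
    (aeval fun n => ⟨y n, Algebra.subset_adjoin (Set.mem_range_self n)⟩)

@[simp]
theorem aevalOfCommute_X (hy : ∀ a b, Commute (y a) (y b)) (n : ν) :
    aevalOfCommute R y hy (X n) = y n := by
  simp [aevalOfCommute]

end AevalOfCommute

section SwapSeq

variable {I : Type} {m : ℕ} {a b : Fin m} (hab : (a : ℕ) + 1 = b)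
include hab

theorem swapSeq_eq_comp_swap (i : Fin m → I) : swapSeq a i = i ∘ Equiv.swap a b := by
  obtain ⟨b, hb⟩ := b
  subst hab
  funext k
  simp only [swapSeq, hb, dif_pos, Fin.eta, Function.comp_apply]

theorem swapSeq_eq_self {i : Fin m → I} (hi : i a = i b) : swapSeq a i = i := by
  rw [swapSeq_eq_comp_swap hab, Equiv.comp_swap_eq_update, hi, Function.update_eq_self, ← hi,
    Function.update_eq_self]

end SwapSeq

namespace KLR

open MvPolynomial

variable {I : Type} [DecidableEq I] {adj : I → I → Prop} {m : ℕ} {A : Type} [Ring A]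
  (K : KLR I adj m A)

/-- The value of a polynomial at the dots `x 0 i, x 1 i, …` of the sequence `i`. -/
noncomputable def dotEval (i : Fin m → I) : MvPolynomial (Fin m) ℤ →ₐ[ℤ] A :=
  aevalOfCommute ℤ (fun k => K.x k i) fun r s => K.x_mul_x r s i

@[simp]
theorem dotEval_X (i : Fin m → I) (k : Fin m) : K.dotEval i (X k) = K.x k i :=
  aevalOfCommute_X _ k

theorem dotEval_C (i : Fin m → I) (n : ℤ) : K.dotEval i (C n) = n := by
  rw [← algebraMap_eq, AlgHom.commutes, eq_intCast]

theorem commute_e_dotEval (i : Fin m → I) (f : MvPolynomial (Fin m) ℤ) :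
    Commute (K.e i) (K.dotEval i f) := by
  induction f using MvPolynomial.induction_on with
  | C n => rw [dotEval_C]; exact (Int.cast_commute n _).symm
  | add f g hf hg => rw [map_add]; exact hf.add_right hg
  | mul_X f k hf =>
    rw [map_mul, dotEval_X]
    exact hf.mul_right ((K.e_mul_x k i).trans (K.x_mul_e k i).symm)

section Crossing

variable {a b : Fin m} (hab : (a : ℕ) + 1 = b) {i : Fin m → I}
include hab

theorem δ_mul_dotEval_of_ne (hi : i a ≠ i b) (f : MvPolynomial (Fin m) ℤ) :
    K.δ a i * K.dotEval i f = K.dotEval (swapSeq a i) (rename (Equiv.swap a b) f) * K.δ a i := by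
  induction f using MvPolynomial.induction_on with
  | C n => rw [rename_C, dotEval_C, dotEval_C, (Int.cast_commute n _).eq]
  | add f g hf hg => simp only [map_add, mul_add, add_mul, hf, hg]
  | mul_X f k hf =>
    rw [map_mul, map_mul, map_mul, ← mul_assoc, hf, mul_assoc, mul_assoc, rename_X, dotEval_X,
      dotEval_X]
    congr 1
    obtain ⟨b, hb⟩ := b
    subst hab
    rcases eq_or_ne k a with rfl | hka
    · rw [Equiv.swap_apply_left]
      exact K.δx_diff1 k hb i hi
    rcases eq_or_ne k ⟨a + 1, hb⟩ with rfl | hkb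
    · rw [Equiv.swap_apply_right]
      exact K.δx_diff2 a hb i hi
    · rw [Equiv.swap_apply_of_ne_of_ne hka hkb]
      exact K.δx_far a k i (Fin.val_ne_of_ne hka) (Fin.val_ne_of_ne hkb)

theorem δ_mul_x_of_eq (hi : i a = i b) (k : Fin m) :
    K.δ a i * K.x k i =
      K.x (Equiv.swap a b k) i * K.δ a i + K.dotEval i (divDiff a b (X k)) * K.e i := by
  have hne : a ≠ b := by rintro rfl; omega
  have hs := swapSeq_eq_self hab hi
  rcases eq_or_ne k a with rfl | hka
  · rw [Equiv.swap_apply_left, divDiff_X_left hne, map_one, one_mul, ← sub_eq_iff_eq_add']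
    obtain ⟨b, hb⟩ := b
    subst hab
    simpa only [hs] using K.δx_same1 k hb i hi
  rcases eq_or_ne k b with rfl | hkb
  · rw [Equiv.swap_apply_right, divDiff_X_right hne, map_neg, map_one, neg_one_mul,
      ← sub_eq_add_neg, eq_sub_iff_add_eq', ← eq_sub_iff_add_eq]
    obtain ⟨b, hb⟩ := k
    subst hab
    simpa only [hs] using (K.δx_same2 a hb i hi).symm
  · rw [Equiv.swap_apply_of_ne_of_ne hka hkb, divDiff_X_of_ne_of_ne hne hka hkb, map_zero,
      zero_mul, add_zero]
    simpa only [hs] using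
      K.δx_far a k i (Fin.val_ne_of_ne hka) (hab ▸ Fin.val_ne_of_ne hkb)

theorem δ_mul_dotEval_of_eq (hi : i a = i b) (f : MvPolynomial (Fin m) ℤ) :
    K.δ a i * K.dotEval i f =
      K.dotEval i (rename (Equiv.swap a b) f) * K.δ a i + K.dotEval i (divDiff a b f) * K.e i := by
  have hne : a ≠ b := by rintro rfl; omega
  induction f using MvPolynomial.induction_on with
  | C n =>
    rw [rename_C, dotEval_C, divDiff_C hne, map_zero, zero_mul, add_zero, (Int.cast_commute n _).eq]
  | add f g hf hg =>
    rw [divDiff_add hne]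
    simp only [map_add, mul_add, add_mul, hf, hg]
    abel
  | mul_X f k hf =>
    rw [divDiff_mul hne]
    have he := (K.commute_e_dotEval i (X k)).eq
    rw [dotEval_X] at he
    simp only [map_mul, map_add, rename_X, dotEval_X, add_mul, mul_assoc, ← he]
    rw [← mul_assoc, hf, add_mul, mul_assoc, mul_assoc, K.δ_mul_x_of_eq hab hi, mul_add]
    abel

end Crossing

/-- The polynomials in the dots that vanish on the idempotent `e i`. -/
noncomputable def dotAnnihilator (i : Fin m → I) : Ideal (MvPolynomial (Fin m) ℤ) where
  carrier := {f | K.dotEval i f * K.e i = 0}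
  zero_mem' := by simp
  add_mem' hf hg := by simp_all [add_mul]
  smul_mem' g f hf := by simp_all [mul_assoc]

variable {K} in
theorem mem_dotAnnihilator {i : Fin m → I} {f : MvPolynomial (Fin m) ℤ} :
    f ∈ K.dotAnnihilator i ↔ K.dotEval i f * K.e i = 0 :=
  Iff.rfl

section DotAnnihilator

variable {a b c : Fin m} (hab : (a : ℕ) + 1 = b) {i : Fin m → I} {f : MvPolynomial (Fin m) ℤ}
include hab

theorem dotEval_mul_δ_eq_zero (hi : i a ≠ i b)
    (hf : rename (Equiv.swap a b) f ∈ K.dotAnnihilator (swapSeq a i)) :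
    K.dotEval i f * K.δ a (swapSeq a i) = 0 := by
  have hss : swapSeq a (swapSeq a i) = i := by
    simp only [swapSeq_eq_comp_swap hab, Function.comp_assoc, ← Equiv.coe_trans, Equiv.swap_swap,
      Equiv.coe_refl, Function.comp_id]
  have hi' : swapSeq a i a ≠ swapSeq a i b := by
    simpa [swapSeq_eq_comp_swap hab] using hi.symm
  have hswap : rename (Equiv.swap a b) (rename (Equiv.swap a b) f) = f := by
    rw [rename_rename, ← Equiv.coe_trans, Equiv.swap_swap, Equiv.coe_refl, rename_id_apply]
  have hδ := K.δ_mul_dotEval_of_ne hab hi' (rename (Equiv.swap a b) f)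
  rw [hss, hswap] at hδ
  rw [← hδ, ← K.δ_mul_e, mul_assoc, (K.commute_e_dotEval _ _).eq, mem_dotAnnihilator.1 hf, mul_zero]

theorem mem_dotAnnihilator_of_not_adj (hi : i a ≠ i b) (hadj : ¬ adj (i a) (i b))
    (hf : rename (Equiv.swap a b) f ∈ K.dotAnnihilator (swapSeq a i)) :
    f ∈ K.dotAnnihilator i := by
  have hδ := K.dotEval_mul_δ_eq_zero hab hi hf
  obtain ⟨b, hb⟩ := b
  subst hab
  rw [mem_dotAnnihilator, ← K.δδ_orth a hb i hi hadj, ← mul_assoc, hδ, zero_mul]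

theorem X_add_X_mul_mem_dotAnnihilator (hi : i a ≠ i b) (hadj : adj (i a) (i b))
    (hf : rename (Equiv.swap a b) f ∈ K.dotAnnihilator (swapSeq a i)) :
    (X a + X b) * f ∈ K.dotAnnihilator i := by
  have hδ := K.dotEval_mul_δ_eq_zero hab hi hf
  have hδδ : K.dotEval i (X a + X b) = K.δ a (swapSeq a i) * K.δ a i := by
    rw [map_add, dotEval_X, dotEval_X]
    obtain ⟨b, hb⟩ := b
    subst hab
    exact (K.δδ_adj a hb i hadj).symm
  rw [mem_dotAnnihilator, mul_comm, map_mul, hδδ, ← mul_assoc, hδ, zero_mul, zero_mul]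

theorem divDiff_mem_dotAnnihilator (hi : i a = i b) (hf : f ∈ K.dotAnnihilator i) :
    divDiff a b f ∈ K.dotAnnihilator i := by
  have hs := swapSeq_eq_self hab hi
  have hδf : K.δ a i * K.dotEval i f = 0 := by
    rw [← K.δ_mul_e, mul_assoc, (K.commute_e_dotEval i f).eq, mem_dotAnnihilator.1 hf, mul_zero]
  have heδ : K.e i * K.δ a i = K.δ a i := by simpa only [hs] using K.e_mul_δ a i
  have hδδ : K.δ a i * K.δ a i = 0 := by
    obtain ⟨b, hb⟩ := b
    subst hab
    simpa only [hs] using K.δδ_same a hb i hi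
  have he : K.x a i * K.δ a i - K.δ a i * K.x b i = K.e i := by
    obtain ⟨b, hb⟩ := b
    subst hab
    simpa only [hs] using K.δx_same2 a hb i hi
  have hDδ : K.dotEval i (divDiff a b f) * K.δ a i = 0 := by
    have := congr_arg (· * K.δ a i) (K.δ_mul_dotEval_of_eq hab hi f)
    simpa only [hδf, zero_mul, add_mul, mul_assoc, hδδ, heδ, mul_zero, zero_add, eq_comm] using this
  have hDx : K.dotEval i (divDiff a b f) * K.x a i = K.x a i * K.dotEval i (divDiff a b f) := by
    rw [← dotEval_X, ← map_mul, mul_comm, map_mul]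
  rw [mem_dotAnnihilator, ← he, mul_sub, ← mul_assoc, hDx, mul_assoc, hDδ, ← mul_assoc, hDδ,
    mul_zero, zero_mul, sub_zero]

theorem mem_dotAnnihilator_of_braid (hbc : (b : ℕ) + 1 = c) (hac : i a = i c)
    (hi : i a ≠ i b) (hadj : adj (i a) (i b))
    (hf₁ : rename (Equiv.swap a b) f ∈ K.dotAnnihilator (swapSeq a i))
    (hf₂ : rename (Equiv.swap b c) f ∈ K.dotAnnihilator (swapSeq b i)) :
    f ∈ K.dotAnnihilator i := by
  have hδ₁ := K.dotEval_mul_δ_eq_zero hab hi hf₁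
  have hδ₂ := K.dotEval_mul_δ_eq_zero hbc (hac ▸ hi.symm) hf₂
  have hca : c ≠ a := by rintro rfl; omega
  have hcb : c ≠ b := by rintro rfl; omega
  have hba : b ≠ a := by rintro rfl; omega
  have hs₁ : swapSeq b (swapSeq a i) = swapSeq a i :=
    swapSeq_eq_self hbc <| by
      simp [swapSeq_eq_comp_swap hab, Equiv.swap_apply_of_ne_of_ne hca hcb, hac]
  have hs₂ : swapSeq a (swapSeq b i) = swapSeq b i :=
    swapSeq_eq_self hab <| by
      simp [swapSeq_eq_comp_swap hbc, Equiv.swap_apply_of_ne_of_ne hba.symm hca.symm, hac]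
  obtain ⟨b, hb⟩ := b
  obtain ⟨c, hc⟩ := c
  subst hab hbc
  have hbraid := K.braid_hard a hc i hac hadj
  rw [hs₁, hs₂] at hbraid
  rw [mem_dotAnnihilator, ← hbraid, mul_sub]
  simp only [← mul_assoc, hδ₁, hδ₂, zero_mul, sub_zero]

end DotAnnihilator

end KLR

/-! ### Vanishing ideals attached to arrangements of beads -/

/-- Two vertices are orthogonal if they are distinct and not adjacent. -/
def Orth {I : Type} (adj : I → I → Prop) (c d : I) : Prop :=
  c ≠ d ∧ ¬ adj c d

/-- The rules that the KLR relations impose on the polynomials vanishing on an idempotent. Beads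
`a : ν` are coloured by `col`, the list `l` records the order in which they are placed, and `Z l`
is the ideal of the polynomials, in one variable per bead, that vanish on the idempotent of the
colour sequence of `l`. -/
structure IsKLRAnnihilator {I ν : Type} [DecidableEq ν] (adj : I → I → Prop) (col : ν → I)
    (Z : List ν → Ideal (MvPolynomial ν ℤ)) : Prop where
  eq_top_of_not_nodup {l} : ¬ l.Nodup → Z l = ⊤
  mem_of_orth {P a b Q f} : Orth adj (col a) (col b) → f ∈ Z (P ++ b :: a :: Q) →
    f ∈ Z (P ++ a :: b :: Q)
  add_mul_mem {P a b Q f} : adj (col a) (col b) → col a ≠ col b → f ∈ Z (P ++ b :: a :: Q) →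
    (MvPolynomial.X a + MvPolynomial.X b) * f ∈ Z (P ++ a :: b :: Q)
  divDiff_mem {P a b Q f} : col a = col b → f ∈ Z (P ++ a :: b :: Q) →
    divDiff a b f ∈ Z (P ++ a :: b :: Q)
  mem_of_braid {P a w b Q f} : col a = col b → adj (col a) (col w) → col a ≠ col w →
    f ∈ Z (P ++ a :: b :: w :: Q) → f ∈ Z (P ++ w :: a :: b :: Q) → f ∈ Z (P ++ a :: w :: b :: Q)

theorem exists_ofFn_mul_swap_eq {m : ℕ} {σ : Equiv.Perm (Fin m)} {P Q : List (Fin m)}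
    {a b : Fin m} (hσ : List.ofFn σ = P ++ a :: b :: Q) :
    ∃ j k : Fin m, (j : ℕ) + 1 = k ∧ σ j = a ∧ σ k = b ∧
      List.ofFn (σ * Equiv.swap j k) = P ++ b :: a :: Q := by
  have hm : m = P.length + (Q.length + 2) := by simpa using congr_arg List.length hσ
  have hget (k : Fin m) : σ k = (P ++ a :: b :: Q)[(k : ℕ)]'(by simp; omega) := by
    simp only [← hσ, List.getElem_ofFn]
  refine ⟨⟨P.length, by omega⟩, ⟨P.length + 1, by omega⟩, rfl, by simp [hget], by simp [hget], ?_⟩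
  refine List.ext_getElem (by simp; omega) fun k hk _ => ?_
  rw [List.length_ofFn] at hk
  rw [List.getElem_ofFn, Equiv.Perm.mul_apply]
  by_cases hka : k = P.length
  · simp [hka, hget]
  by_cases hkb : k = P.length + 1
  · simp [hkb, hget]
  rw [Equiv.swap_apply_of_ne_of_ne (by simpa [Fin.ext_iff] using hka)
    (by simpa [Fin.ext_iff] using hkb), hget]
  grind

namespace KLR

open MvPolynomial

variable {I : Type} [DecidableEq I] {adj : I → I → Prop} {m : ℕ} {A : Type} [Ring A]
  (K : KLR I adj m A) (q : Fin m → I)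

/-- The polynomials vanishing on the idempotent obtained from `q` by placing the strands in the
order `l`, where the variables name strands of `q` instead of positions in the new sequence. If
`l` does not list every strand exactly once, this is the unit ideal. -/
noncomputable def labelledAnnihilator (l : List (Fin m)) : Ideal (MvPolynomial (Fin m) ℤ) :=
  ⨅ (σ : Equiv.Perm (Fin m)) (_ : List.ofFn σ = l),
    (K.dotAnnihilator (q ∘ σ)).comap (rename σ.symm)

variable {K q}

theorem mem_labelledAnnihilator {l : List (Fin m)} {f : MvPolynomial (Fin m) ℤ} :
    f ∈ K.labelledAnnihilator q l ↔ ∀ σ : Equiv.Perm (Fin m), List.ofFn σ = l →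
      rename σ.symm f ∈ K.dotAnnihilator (q ∘ σ) := by
  simp only [labelledAnnihilator, Ideal.mem_iInf, Ideal.mem_comap]

theorem exists_rename_swap_mem {P Q : List (Fin m)} {a b : Fin m} {σ : Equiv.Perm (Fin m)}
    (hσ : List.ofFn σ = P ++ a :: b :: Q) {f : MvPolynomial (Fin m) ℤ}
    (hf : f ∈ K.labelledAnnihilator q (P ++ b :: a :: Q)) :
    ∃ j k : Fin m, (j : ℕ) + 1 = k ∧ σ j = a ∧ σ k = b ∧
      rename (Equiv.swap j k) (rename σ.symm f) ∈ K.dotAnnihilator (swapSeq j (q ∘ σ)) := by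
  obtain ⟨j, k, hjk, hj, hk, hσ'⟩ := exists_ofFn_mul_swap_eq hσ
  refine ⟨j, k, hjk, hj, hk, ?_⟩
  rw [swapSeq_eq_comp_swap hjk, rename_rename, Function.comp_assoc, ← Equiv.Perm.coe_mul]
  exact mem_labelledAnnihilator.1 hf (σ * Equiv.swap j k) hσ'

variable (K q)

theorem isKLRAnnihilator_labelledAnnihilator :
    IsKLRAnnihilator adj q (K.labelledAnnihilator q) where
  eq_top_of_not_nodup hl := by
    refine (Ideal.eq_top_iff_one _).2 (mem_labelledAnnihilator.2 fun σ hσ => (hl ?_).elim)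
    exact hσ ▸ List.nodup_ofFn.2 σ.injective
  mem_of_orth hab hf := by
    refine mem_labelledAnnihilator.2 fun σ hσ => ?_
    obtain ⟨j, k, hjk, rfl, rfl, hf'⟩ := exists_rename_swap_mem hσ hf
    exact K.mem_dotAnnihilator_of_not_adj hjk hab.1 hab.2 hf'
  add_mul_mem hadj hne hf := by
    refine mem_labelledAnnihilator.2 fun σ hσ => ?_
    obtain ⟨j, k, hjk, rfl, rfl, hf'⟩ := exists_rename_swap_mem hσ hf
    simpa using K.X_add_X_mul_mem_dotAnnihilator hjk hne hadj hf'
  divDiff_mem hab hf := by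
    refine mem_labelledAnnihilator.2 fun σ hσ => ?_
    obtain ⟨j, k, hjk, rfl, rfl, -⟩ := exists_ofFn_mul_swap_eq hσ
    have hne : j ≠ k := by rintro rfl; omega
    rw [rename_divDiff _ (σ.injective.ne hne), σ.symm_apply_apply, σ.symm_apply_apply]
    exact K.divDiff_mem_dotAnnihilator hjk hab (mem_labelledAnnihilator.1 hf σ hσ)
  mem_of_braid {P a w b Q f} hab hadj hne hf₂ hf₁ := by
    refine mem_labelledAnnihilator.2 fun σ hσ => ?_
    obtain ⟨i, j, hij, rfl, rfl, hf₁'⟩ := exists_rename_swap_mem hσ hf₁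
    obtain ⟨j', k, hjk, hj', rfl, hf₂'⟩ :=
      exists_rename_swap_mem (P := P ++ [σ i]) (by simpa using hσ) (by simpa using hf₂)
    obtain rfl := σ.injective hj'
    exact K.mem_dotAnnihilator_of_braid hij hjk hab hne hadj hf₁' hf₂'

end KLR

theorem CycKLR.X_pow_mem_labelledAnnihilator {I : Type} [DecidableEq I] {adj : I → I → Prop}
    {m : ℕ} {A : Type} [Ring A] {Λ : I →₀ ℕ} (K : CycKLR I adj m A Λ) (q : Fin m → I) (a : Fin m)
    (Q : List (Fin m)) :
    MvPolynomial.X a ^ Λ (q a) ∈ K.labelledAnnihilator q (a :: Q) := by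
  refine KLR.mem_labelledAnnihilator.2 fun σ hσ => ?_
  have hm : 0 < m := a.pos
  obtain rfl : σ ⟨0, hm⟩ = a := by
    have hhead : (List.ofFn σ)[0]? = some a := by rw [hσ, List.getElem?_cons_zero]
    simpa [hm] using hhead
  rw [map_pow, MvPolynomial.rename_X, σ.symm_apply_apply, KLR.mem_dotAnnihilator, map_pow,
    KLR.dotEval_X]
  exact K.cyc hm (q ∘ σ)

namespace IsKLRAnnihilator

open MvPolynomial

variable {I ν : Type} [DecidableEq ν] {adj : I → I → Prop} {col : ν → I}
  {Z : List ν → Ideal (MvPolynomial ν ℤ)}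

section Rules

variable (h : IsKLRAnnihilator adj col Z) {P L M R Q : List ν} {a b c u v w x z : ν}
  {f : MvPolynomial ν ℤ} {k : ℕ}
include h

theorem cons_append_mem_of_orth (hR : ∀ y ∈ R, Orth adj (col x) (col y))
    (hf : f ∈ Z (P ++ (R ++ x :: Q))) : f ∈ Z (P ++ x :: (R ++ Q)) := by
  induction R generalizing P with
  | nil => exact hf
  | cons y R ih =>
    rw [List.forall_mem_cons] at hR
    have hyx : f ∈ Z ((P ++ [y]) ++ x :: (R ++ Q)) := ih hR.2 (by simpa using hf)
    exact h.mem_of_orth hR.1 (by simpa using hyx)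

theorem append_append_mem_of_orth (hLR : ∀ x ∈ L, ∀ y ∈ R, Orth adj (col x) (col y))
    (hf : f ∈ Z (P ++ (R ++ (L ++ Q)))) : f ∈ Z (P ++ (L ++ (R ++ Q))) := by
  induction L generalizing P with
  | nil => exact hf
  | cons x L ih =>
    rw [List.forall_mem_cons] at hLR
    have hx : f ∈ Z (P ++ x :: (R ++ (L ++ Q))) := h.cons_append_mem_of_orth hLR.1 hf
    simpa using ih (P := P ++ [x]) hLR.2 (by simpa using hx)

theorem append_mem_of_filter_mem (p : ν → Prop) [DecidablePred p]
    (hL : L.Pairwise fun x y => ¬ p x → p y → Orth adj (col x) (col y))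
    (hf : f ∈ Z (P ++ (L.filter p ++ (L.filter (¬ p ·) ++ Q)))) : f ∈ Z (P ++ (L ++ Q)) := by
  induction L generalizing P with
  | nil => exact hf
  | cons x L ih =>
    rw [List.pairwise_cons] at hL
    suffices f ∈ Z ((P ++ [x]) ++ (L.filter p ++ (L.filter (¬ p ·) ++ Q))) by
      simpa using ih hL.2 this
    by_cases hx : p x
    · simpa [hx] using hf
    · have hfilter : ∀ y ∈ L.filter p, Orth adj (col x) (col y) := fun y hy =>
        hL.1 y (List.mem_of_mem_filter hy) hx (by simpa using (List.mem_filter.1 hy).2)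
      simpa using h.cons_append_mem_of_orth hfilter (by simpa [hx] using hf)

theorem rename_swap_mem (hab : col a = col b) (hf : f ∈ Z (P ++ a :: b :: Q)) :
    rename (Equiv.swap a b) f ∈ Z (P ++ a :: b :: Q) := by
  rw [← sub_sub_self f (rename _ f), ← X_sub_X_mul_divDiff]
  exact sub_mem hf (Ideal.mul_mem_left _ _ (h.divDiff_mem hab hf))

theorem X_pow_right_mem (hab : col a = col b) (ha : X a ^ k ∈ Z (P ++ a :: b :: Q)) :
    X b ^ k ∈ Z (P ++ a :: b :: Q) := by
  simpa using h.rename_swap_mem hab ha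

theorem X_pow_mem_of_add_mul_mem (hab : col a = col b) (hc : c ∈ Q) (hu : u ∈ Q)
    (hf : (X b + X c) * X u ^ k ∈ Z (P ++ a :: b :: Q)) : X u ^ k ∈ Z (P ++ a :: b :: Q) := by
  by_cases hnd : (P ++ a :: b :: Q).Nodup
  · simp only [List.nodup_append, List.nodup_cons, List.mem_cons, not_or] at hnd
    obtain ⟨-, ⟨⟨hab', haQ⟩, hbQ, -⟩, -⟩ := hnd
    have hdiff : divDiff a b ((X b + X c) * X u ^ k : MvPolynomial ν ℤ) = -X u ^ k :=
      divDiff_eq_of_mul_eq hab' <| by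
        simp only [map_mul, map_add, map_pow, rename_X, Equiv.swap_apply_right,
          Equiv.swap_apply_of_ne_of_ne (ne_of_mem_of_not_mem hc haQ) (ne_of_mem_of_not_mem hc hbQ),
          Equiv.swap_apply_of_ne_of_ne (ne_of_mem_of_not_mem hu haQ) (ne_of_mem_of_not_mem hu hbQ)]
        ring
    simpa [hdiff] using h.divDiff_mem hab hf
  · rw [h.eq_top_of_not_nodup hnd]
    trivial

theorem X_pow_add_mem (hadj : adj (col w) (col u)) (hne : col w ≠ col u) {r s : ℕ}
    (hw : X w ^ r ∈ Z (P ++ w :: u :: Q)) (hu : X u ^ s ∈ Z (P ++ u :: w :: Q)) :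
    X u ^ (r + s) ∈ Z (P ++ w :: u :: Q) := by
  obtain ⟨g, hg⟩ : (X w + X u : MvPolynomial ν ℤ) ∣ X w ^ r - (-X u) ^ r := by
    simpa using sub_dvd_pow_sub_pow (X w : MvPolynomial ν ℤ) (-X u) r
  have hsplit : (X u ^ (r + s) : MvPolynomial ν ℤ) =
      (-1) ^ r * X u ^ s * X w ^ r - (-1) ^ r * g * ((X w + X u) * X u ^ s) := by
    have hsign : ((-1) ^ r * (-1) ^ r : MvPolynomial ν ℤ) = 1 := by rw [← mul_pow]; simp
    rw [neg_pow] at hg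
    rw [pow_add]
    linear_combination (-X u ^ r * X u ^ s) * hsign - (-1) ^ r * X u ^ s * hg
  rw [hsplit]
  exact sub_mem (Ideal.mul_mem_left _ _ hw)
    (Ideal.mul_mem_left _ _ (h.add_mul_mem hadj hne hu))

theorem X_pow_add_mem_of_orth (hadj : adj (col w) (col u)) (hne : col w ≠ col u) {r s : ℕ}
    (hLM : ∀ x ∈ L, ∀ y ∈ M ++ [w], Orth adj (col x) (col y))
    (hM : ∀ y ∈ M, Orth adj (col y) (col u))
    (hw : X w ^ r ∈ Z (M ++ w :: (L ++ u :: Q))) (hu : X u ^ s ∈ Z (L ++ u :: (M ++ w :: Q))) :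
    X u ^ (r + s) ∈ Z (L ++ (M ++ w :: u :: Q)) := by
  have hw' : X w ^ r ∈ Z ((L ++ M) ++ w :: u :: Q) := by
    simpa using h.append_append_mem_of_orth (P := []) hLM (by simpa using hw)
  have hu' : X u ^ s ∈ Z ((L ++ M) ++ u :: w :: Q) := by
    simpa using h.append_append_mem_of_orth (R := [u]) (by simpa using hM) (by simpa using hu)
  simpa using h.X_pow_add_mem hadj hne hw' hu'

theorem X_pow_mem_of_triple (hzu : col z = col u) (hadj : adj (col z) (col w))
    (hne : col z ≠ col w) (hz : X z ^ k ∈ Z (P ++ w :: z :: u :: Q))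
    (hu : X u ^ k ∈ Z (P ++ z :: u :: w :: Q)) : X u ^ k ∈ Z (P ++ z :: w :: u :: Q) := by
  have hu' : X u ^ k ∈ Z ((P ++ [w]) ++ z :: u :: Q) := h.X_pow_right_mem hzu (by simpa using hz)
  exact h.mem_of_braid hzu hadj hne hu (by simpa using hu')

theorem X_pow_mem_of_square (hzu : col z = col u) (hzw : adj (col z) (col w))
    (hzw' : col z ≠ col w) (hzv : adj (col z) (col v)) (hzv' : col z ≠ col v)
    (hwu : adj (col w) (col u)) (hwv : Orth adj (col w) (col v))
    (hz : X z ^ k ∈ Z (P ++ z :: w :: v :: u :: Q)) (hz₁ : X z ^ k ∈ Z (P ++ z :: u :: v :: w :: Q))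
    (hz₂ : X z ^ k ∈ Z (P ++ v :: z :: u :: w :: Q))
    (hz₃ : X z ^ k ∈ Z (P ++ w :: z :: u :: v :: Q))
    (hz₄ : X z ^ k ∈ Z (P ++ w :: v :: z :: u :: Q)) :
    X u ^ k ∈ Z (P ++ z :: w :: v :: u :: Q) := by
  set D := divDiff z u (X z ^ k : MvPolynomial ν ℤ)
  have hDiff : (X z - X u) * D = X z ^ k - X u ^ k := by
    rw [X_sub_X_mul_divDiff, map_pow, rename_X, Equiv.swap_apply_left]
  have hwuD : (X w + X u) * D ∈ Z (P ++ z :: w :: v :: u :: Q) := by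
    have hD₂ : D ∈ Z ((P ++ [v]) ++ z :: u :: w :: Q) := h.divDiff_mem hzu (by simpa using hz₂)
    have hD₁₂ : D ∈ Z (P ++ z :: v :: u :: w :: Q) :=
      h.mem_of_braid hzu hzv hzv' (h.divDiff_mem hzu hz₁) (by simpa using hD₂)
    have hwu' : (X w + X u) * D ∈ Z ((P ++ [z, v]) ++ w :: u :: Q) :=
      h.add_mul_mem hwu (hzu ▸ hzw'.symm) (by simpa using hD₁₂)
    simpa using h.mem_of_orth (P := P ++ [z]) hwv (by simpa using hwu')
  have hzwD : (X z + X w) * D ∈ Z (P ++ z :: w :: v :: u :: Q) := by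
    have hD₃ : D ∈ Z ((P ++ [w]) ++ z :: u :: v :: Q) := h.divDiff_mem hzu (by simpa using hz₃)
    have hD₄ : D ∈ Z ((P ++ [w, v]) ++ z :: u :: Q) := h.divDiff_mem hzu (by simpa using hz₄)
    have hD₃₄ : D ∈ Z ((P ++ [w]) ++ z :: v :: u :: Q) :=
      h.mem_of_braid hzu hzv hzv' hD₃ (by simpa using hD₄)
    exact h.add_mul_mem hzw hzw' (by simpa using hD₃₄)
  have hsplit : (X u ^ k : MvPolynomial ν ℤ) = X z ^ k - ((X z + X w) * D - (X w + X u) * D) := by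
    linear_combination hDiff
  rw [hsplit]
  exact sub_mem hz (sub_mem hzwD hwuD)

end Rules

/-- `f` vanishes on every arrangement that begins with fewer than `n` beads, all satisfying `p`,
including `u`. This is the shape of the inductive hypothesis on the number of beads. -/
def VanishesBelow (Z : List ν → Ideal (MvPolynomial ν ℤ)) (p : ν → Prop) (n : ℕ) (u : ν)
    (f : MvPolynomial ν ℤ) : Prop :=
  ∀ ⦃l Q : List ν⦄, l.length < n → u ∈ l → (∀ x ∈ l, p x) → f ∈ Z (l ++ Q)

section VanishesBelow

variable (h : IsKLRAnnihilator adj col Z) {p : ν → Prop} {n k : ℕ} {u a a' t v w x z : ν}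
  {P L M T Q : List ν} {f : MvPolynomial ν ℤ}
include h

theorem cons_append_mem_of_vanishesBelow (hZ : VanishesBelow Z p n u f)
    (hx : ∀ y ∈ M, Orth adj (col x) (col y)) (hu : u ∈ L ++ M) (hn : (L ++ M).length < n)
    (hp : ∀ y ∈ L ++ M, p y) : f ∈ Z (L ++ x :: (M ++ Q)) :=
  h.cons_append_mem_of_orth hx (by simpa using hZ (Q := x :: Q) hn hu hp)

theorem X_pow_mem_of_repeat (hZ : VanishesBelow Z p n u (X u ^ k)) (haa : col a' = col a)
    (hat : adj (col a) (col t)) (hat' : col a ≠ col t) (hM : ∀ y ∈ M, Orth adj (col a') (col y))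
    (hT : ∀ y ∈ T, Orth adj (col a) (col y)) (hu : u ∈ t :: T)
    (hp : ∀ y ∈ P ++ a' :: (M ++ a :: t :: T), p y)
    (hn : (P ++ a' :: (M ++ a :: t :: T)).length ≤ n) :
    X u ^ k ∈ Z (P ++ a' :: (M ++ a :: t :: (T ++ Q))) := by
  refine h.cons_append_mem_of_orth hM ?_
  rw [← List.append_assoc]
  have hta : X u ^ k ∈ Z ((P ++ M ++ [a', t]) ++ a :: (T ++ Q)) :=
    h.cons_append_mem_of_vanishesBelow hZ hT (by grind) (by grind) (by grind)
  have hadd : (X a + X t) * X u ^ k ∈ Z ((P ++ M ++ [a']) ++ a :: t :: (T ++ Q)) :=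
    h.add_mul_mem hat hat' (by simpa using hta)
  exact h.X_pow_mem_of_add_mul_mem haa (c := t) (by simp) (by grind) (by simpa using hadd)

theorem X_pow_mem_of_repeat_braid (hZ : VanishesBelow Z p n u (X u ^ k)) (haa : col a' = col a)
    (hat : adj (col a) (col t)) (hat' : col a ≠ col t) (hax : adj (col a) (col x))
    (hax' : col a ≠ col x) (hM : ∀ y ∈ M, Orth adj (col a') (col y))
    (hT : ∀ y ∈ T, Orth adj (col a) (col y)) (hx : ∀ y ∈ t :: T, Orth adj (col x) (col y))
    (hu : u ∈ t :: T) (hp : ∀ y ∈ P ++ a' :: (M ++ x :: a :: t :: T), p y)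
    (hn : (P ++ a' :: (M ++ x :: a :: t :: T)).length ≤ n) :
    X u ^ k ∈ Z (P ++ a' :: (M ++ x :: a :: t :: (T ++ Q))) := by
  refine h.cons_append_mem_of_orth hM ?_
  rw [← List.append_assoc]
  have hxa : X u ^ k ∈ Z ((P ++ M ++ [x]) ++ a' :: ([] ++ a :: t :: (T ++ Q))) :=
    h.X_pow_mem_of_repeat hZ haa hat hat' (by simp) hT hu (by grind) (by grind)
  have hxt : X u ^ k ∈ Z ((P ++ M ++ [a', a]) ++ x :: ((t :: T) ++ Q)) :=
    h.cons_append_mem_of_vanishesBelow hZ hx (by grind) (by grind) (by grind)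
  exact h.mem_of_braid haa (haa ▸ hax) (haa ▸ hax') (by simpa using hxt)
    (by simpa using hxa)

theorem X_pow_mem_of_neighbour (hu : VanishesBelow Z p n u (X u ^ k))
    (hz : VanishesBelow Z p n z (X z ^ k)) (hzu : col z = col u) (hzw : adj (col z) (col w))
    (hzw' : col z ≠ col w) (hM : ∀ y ∈ M, Orth adj (col z) (col y))
    (hp : ∀ y ∈ P ++ z :: (M ++ [w, u]), p y) (hn : (P ++ z :: (M ++ [w, u])).length ≤ n) :
    X u ^ k ∈ Z (P ++ z :: (M ++ w :: u :: Q)) := by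
  refine h.cons_append_mem_of_orth hM ?_
  rw [← List.append_assoc]
  refine h.X_pow_mem_of_triple hzu hzw hzw' ?_ ?_
  · simpa using hz (l := P ++ M ++ [w, z]) (Q := u :: Q) (by grind) (by simp) (by grind)
  · simpa using hu (l := P ++ M ++ [z, u]) (Q := w :: Q) (by grind) (by simp) (by grind)

theorem X_pow_mem_of_two_neighbours (hz : VanishesBelow Z p n z (X z ^ k)) (hzu : col z = col u)
    (hzw : adj (col z) (col w)) (hzw' : col z ≠ col w) (hzv : adj (col z) (col v))
    (hzv' : col z ≠ col v) (hwu : adj (col w) (col u)) (hwv : Orth adj (col w) (col v))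
    (hL : ∀ y ∈ L, Orth adj (col z) (col y)) (hM : ∀ y ∈ M, Orth adj (col z) (col y))
    (hwM : ∀ y ∈ M, Orth adj (col w) (col y))
    (hp : ∀ y ∈ P ++ z :: (L ++ w :: (M ++ [v, u])), p y)
    (hn : (P ++ z :: (L ++ w :: (M ++ [v, u]))).length ≤ n) :
    X u ^ k ∈ Z (P ++ z :: (L ++ w :: (M ++ v :: u :: Q))) := by
  have hzZ (l Q : List ν) (hl : l.length ≤ 2) (hlwv : ∀ y ∈ l, y = w ∨ y = v) :
      X z ^ k ∈ Z ((P ++ L ++ M) ++ (l ++ z :: Q)) := by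
    simpa using hz (l := P ++ L ++ M ++ l ++ [z]) (Q := Q) (by grind) (by simp) (by grind)
  have hsquare : X u ^ k ∈ Z ((P ++ L ++ M) ++ z :: w :: v :: u :: Q) :=
    h.X_pow_mem_of_square hzu hzw hzw' hzv hzv' hwu hwv (hzZ [] _ (by simp) (by simp))
      (hzZ [] _ (by simp) (by simp)) (hzZ [v] _ (by simp) (by simp))
      (hzZ [w] _ (by simp) (by simp)) (hzZ [w, v] _ (by simp) (by simp))
  have hzLM : X u ^ k ∈ Z (P ++ z :: ((L ++ M) ++ w :: v :: u :: Q)) :=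
    h.cons_append_mem_of_orth (by grind) (by simpa using hsquare)
  simpa using h.cons_append_mem_of_orth (P := P ++ z :: L) hwM (by simpa using hzLM)

end VanishesBelow

end IsKLRAnnihilator

/-! ### The quiver of type `A_∞` -/

theorem adjZ_iff {c d : ℤ} : adjZ c d ↔ c = d + 1 ∨ d = c + 1 := by
  unfold adjZ
  omega

theorem orth_adjZ_iff {c d : ℤ} : Orth adjZ c d ↔ c + 1 < d ∨ d + 1 < c := by
  unfold Orth adjZ
  omega

/-- The beads of `M`, lying above the runner `c`, form a reduced block: only the last one is on
the runner next to `c`. -/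
def IsReduced {ν : Type} (col : ν → ℤ) (c : ℤ) (M : List ν) : Prop :=
  M = [] ∨ ∃ M' x, M = M' ++ [x] ∧ col x = c + 1 ∧ ∀ y ∈ M', c + 1 < col y

theorem exists_append_cons_forall_not {α : Type*} {p : α → Prop} {l : List α}
    (hl : ∃ x ∈ l, p x) : ∃ l₁ x l₂, l = l₁ ++ x :: l₂ ∧ p x ∧ ∀ y ∈ l₂, ¬ p y := by
  classical
  obtain ⟨x, hx⟩ : ∃ x, l.reverse.find? p = some x :=
    Option.isSome_iff_exists.1 (List.find?_isSome.2 (by simpa using hl))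
  obtain ⟨hpx, l₂, l₁, hl', hl₂⟩ := List.find?_eq_some_iff_append.1 hx
  refine ⟨l₁.reverse, x, l₂.reverse, ?_, by simpa using hpx, by simpa using hl₂⟩
  rw [← l.reverse_reverse, hl']
  simp

namespace IsKLRAnnihilator

open MvPolynomial

variable {ν : Type} [DecidableEq ν] {col : ν → ℤ} {Z : List ν → Ideal (MvPolynomial ν ℤ)}

theorem neg (h : IsKLRAnnihilator adjZ col Z) : IsKLRAnnihilator adjZ (fun x => -col x) Z where
  eq_top_of_not_nodup := h.eq_top_of_not_nodup
  mem_of_orth hab := h.mem_of_orth (by rw [orth_adjZ_iff] at *; omega)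
  add_mul_mem hab hne := h.add_mul_mem (by rw [adjZ_iff] at *; omega) (by simpa using hne)
  divDiff_mem hab := h.divDiff_mem (neg_injective hab)
  mem_of_braid hab haw hne :=
    h.mem_of_braid (neg_injective hab) (by rw [adjZ_iff] at *; omega) (by simpa using hne)

theorem X_pow_mem_or_isReduced (h : IsKLRAnnihilator adjZ col Z) {p : ν → Prop} {n k : ℕ}
    {u t : ν} {P M T Q : List ν} (hZ : VanishesBelow Z p n u (X u ^ k)) (hu : u ∈ t :: T)
    (hM : ∀ x ∈ M, col t < col x) (hT : ∀ x ∈ T, col x < col t)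
    (hp : ∀ x ∈ P ++ (M ++ t :: T), p x) (hn : (P ++ (M ++ t :: T)).length ≤ n) :
    X u ^ k ∈ Z (P ++ (M ++ t :: (T ++ Q))) ∨ IsReduced col (col t) M := by
  rcases List.eq_nil_or_concat M with rfl | ⟨M', a, rfl⟩
  · exact .inr (.inl rfl)
  rw [List.concat_eq_append] at *
  have hta : col t < col a := hM a (by simp)
  rcases (Int.add_one_le_iff.2 hta).lt_or_eq with ha | ha
  · have hx : X u ^ k ∈ Z ((P ++ M') ++ a :: ((t :: T) ++ Q)) :=
      h.cons_append_mem_of_vanishesBelow hZ (by grind [orth_adjZ_iff]) (by grind) (by grind)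
        (by grind)
    exact .inl (by simpa using hx)
  by_cases hM' : ∀ y ∈ M', col t + 1 < col y
  · exact .inr (.inr ⟨M', a, rfl, ha.symm, hM'⟩)
  left
  obtain ⟨L, a', R, rfl, haa, hR⟩ :=
    exists_append_cons_forall_not (l := M') (p := fun y => col y = col a) (by grind)
  have hat : adjZ (col a) (col t) := adjZ_iff.2 (by omega)
  have hrec := X_pow_mem_or_isReduced h (P := P ++ L ++ [a']) (M := R) (t := a) (T := t :: T)
    (Q := Q) hZ (by grind) (by grind) (by grind) (by grind) (by grind)
  rcases hrec with hR | rfl | ⟨R, x, rfl, hx, hR⟩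
  · simpa using hR
  · have := h.X_pow_mem_of_repeat (P := P ++ L) (M := []) (Q := Q) (T := T) hZ haa hat hta.ne'
      (by simp) (by grind [orth_adjZ_iff]) hu (by grind) (by grind)
    simpa using this
  · have := h.X_pow_mem_of_repeat_braid (P := P ++ L) (M := R) (Q := Q) (T := T) (x := x) hZ haa hat
      hta.ne' (adjZ_iff.2 (by omega)) (by omega) (by grind [orth_adjZ_iff])
      (by grind [orth_adjZ_iff]) (by grind [orth_adjZ_iff]) hu (by grind) (by grind)
    simpa using this
termination_by M.length

theorem X_pow_mem_of_isReduced (h : IsKLRAnnihilator adjZ col Z) {p : ν → Prop} {n k : ℕ} {u : ν}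
    {P B Q : List ν} (hZ : VanishesBelow Z p n u (X u ^ k)) (hB : ∀ x ∈ B, col x ≠ col u)
    (hp : ∀ x ∈ P ++ (B ++ [u]), p x) (hn : (P ++ (B ++ [u])).length ≤ n)
    (hLR : ∀ L R, (L ++ R).Perm B → (∀ x ∈ L, col x < col u) → (∀ x ∈ R, col u < col x) →
      IsReduced (fun x => -col x) (-col u) L → IsReduced col (col u) R →
      X u ^ k ∈ Z (P ++ (L ++ (R ++ u :: Q)))) :
    X u ^ k ∈ Z (P ++ (B ++ u :: Q)) := by
  refine h.append_mem_of_filter_mem (fun x => col x < col u)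
    (List.pairwise_of_forall_mem_list (by grind [orth_adjZ_iff])) ?_
  obtain ⟨L, hL⟩ : ∃ L, L = B.filter fun x => col x < col u := ⟨_, rfl⟩
  obtain ⟨R, hR⟩ : ∃ R, R = B.filter fun x => ¬ col x < col u := ⟨_, rfl⟩
  have hLu : ∀ x ∈ L, col x < col u := by grind
  have hRu : ∀ x ∈ R, col u < col x := by grind
  have hperm : (L ++ R).Perm B := by
    simpa only [hL, hR, decide_not] using List.filter_append_perm (col · < col u) B
  have hlen := hperm.length_eq
  have hpLR : ∀ x ∈ L ++ R, p x := fun x hx => hp x (by simp [hperm.mem_iff.1 hx])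
  rw [← hL, ← hR]
  rcases h.X_pow_mem_or_isReduced (P := P ++ L) (M := R) (T := []) (Q := Q) hZ (by simp) hRu
    (by simp) (by grind) (by grind) with hmem | hRred
  · simpa using hmem
  rcases h.neg.X_pow_mem_or_isReduced (t := u) (P := P ++ R) (M := L) (T := []) (Q := Q) hZ
    (by simp) (by simpa using hLu) (by simp) (by grind) (by grind) with hmem | hLred
  · exact h.append_append_mem_of_orth (by grind [orth_adjZ_iff]) (by simpa using hmem)
  · exact hLR L R hperm hLu hRu hLred hRred

theorem X_pow_mem_of_col_eq (h : IsKLRAnnihilator adjZ col Z) {p : ν → Prop} {n k : ℕ} {u z : ν}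
    {P B Q : List ν} (hu : VanishesBelow Z p n u (X u ^ k)) (hz : VanishesBelow Z p n z (X z ^ k))
    (hzu : col z = col u) (hB : ∀ x ∈ B, col x ≠ col u) (hp : ∀ x ∈ P ++ z :: (B ++ [u]), p x)
    (hn : (P ++ z :: (B ++ [u])).length ≤ n) :
    X u ^ k ∈ Z (P ++ z :: (B ++ u :: Q)) := by
  suffices X u ^ k ∈ Z ((P ++ [z]) ++ (B ++ u :: Q)) by simpa using this
  refine h.X_pow_mem_of_isReduced hu hB (by simpa using hp) (by simpa using hn)
    fun L R hperm _ _ hL hR => ?_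
  have hlen := hperm.length_eq
  have hpLR : ∀ x ∈ L ++ R, p x := fun x hx => hp x (by simp [hperm.mem_iff.1 hx])
  suffices X u ^ k ∈ Z (P ++ z :: (L ++ (R ++ u :: Q))) by simpa using this
  simp only [IsReduced] at hL
  rcases hL with rfl | ⟨L, w, rfl, hw, hL⟩ <;> rcases hR with rfl | ⟨R, v, rfl, hv, hR⟩
  · exact h.X_pow_right_mem hzu <| by
      simpa using hz (l := P ++ [z]) (Q := u :: Q) (by grind) (by simp) (by grind)
  · simpa using h.X_pow_mem_of_neighbour (Q := Q) hu hz hzu (adjZ_iff.2 (by omega)) (by omega)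
      (M := R) (w := v) (by grind [orth_adjZ_iff]) (by grind) (by grind)
  · simpa using h.X_pow_mem_of_neighbour (Q := Q) hu hz hzu (adjZ_iff.2 (by omega)) (by omega)
      (M := L) (w := w) (by grind [orth_adjZ_iff]) (by grind) (by grind)
  · simpa using h.X_pow_mem_of_two_neighbours (Q := Q) hz hzu (adjZ_iff.2 (by omega)) (by omega)
      (adjZ_iff.2 (by omega)) (by omega) (adjZ_iff.2 (by omega)) (orth_adjZ_iff.2 (by omega))
      (L := L) (w := w) (M := R) (v := v) (by grind [orth_adjZ_iff]) (by grind [orth_adjZ_iff])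
      (by grind [orth_adjZ_iff]) (by grind) (by grind)

theorem X_pow_sum_mem_of_forall_col_ne (h : IsKLRAnnihilator adjZ col Z) {Λ : ℤ → ℕ}
    (hcyc : ∀ a Q, X a ^ Λ (col a) ∈ Z (a :: Q)) {n : ℕ}
    (hZ : ∀ S u, VanishesBelow Z (fun x => col x ∈ S) n u (X u ^ (∑ d ∈ S, Λ d))) {S : Finset ℤ}
    {B Q : List ν} {u : ν} (hB : ∀ x ∈ B, col x ≠ col u) (hS : ∀ x ∈ B ++ [u], col x ∈ S)
    (hn : (B ++ [u]).length ≤ n) :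
    X u ^ (∑ d ∈ S, Λ d) ∈ Z (B ++ u :: Q) := by
  refine h.X_pow_mem_of_isReduced (P := []) (hZ S u) hB hS hn fun L R hperm hLu hRu hL hR => ?_
  have hlen := hperm.length_eq
  have hSLR : ∀ x ∈ L ++ R, col x ∈ S := fun x hx => hS x (by simp [hperm.mem_iff.1 hx])
  have huS : col u ∈ S := hS u (by simp)
  rcases hR with rfl | ⟨M, w, rfl, hw, hM⟩
  · rcases hL with rfl | ⟨M, w, rfl, hw, hM⟩
    · exact Ideal.mem_of_dvd _ (pow_dvd_pow _ (Finset.single_le_sum_of_canonicallyOrdered huS))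
        (hcyc u Q)
    · beta_reduce at hw hM
      rw [← Finset.sum_filter_add_sum_filter_not S (· < col u)]
      suffices X u ^ _ ∈ Z ([] ++ (M ++ w :: u :: Q)) by simpa using this
      refine h.X_pow_add_mem_of_orth (adjZ_iff.2 (by omega)) (by omega) (by simp)
        (by grind [orth_adjZ_iff]) ?_ ?_
      · simpa using hZ (S.filter (· < col u)) w (l := M ++ [w]) (Q := u :: Q) (by grind) (by simp)
          (by grind)
      · simpa using hZ (S.filter (¬ · < col u)) u (l := [u]) (Q := M ++ w :: Q) (by grind) (by simp)
          (by grind)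
  · rw [← Finset.sum_filter_add_sum_filter_not S (col u < ·)]
    suffices X u ^ _ ∈ Z (L ++ (M ++ w :: u :: Q)) by simpa using this
    refine h.X_pow_add_mem_of_orth (adjZ_iff.2 (by omega)) (by omega) (by grind [orth_adjZ_iff])
      (by grind [orth_adjZ_iff]) ?_ ?_
    · simpa using hZ (S.filter (col u < ·)) w (l := M ++ [w]) (Q := L ++ u :: Q) (by grind)
        (by simp) (by grind)
    · simpa using hZ (S.filter (¬ col u < ·)) u (l := L ++ [u]) (Q := M ++ w :: Q) (by grind)
        (by simp) (by grind)

theorem X_pow_sum_mem (h : IsKLRAnnihilator adjZ col Z) {Λ : ℤ → ℕ}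
    (hcyc : ∀ a Q, X a ^ Λ (col a) ∈ Z (a :: Q)) {S : Finset ℤ} {l Q : List ν} {u : ν} (hu : u ∈ l)
    (hS : ∀ x ∈ l, col x ∈ S) : X u ^ (∑ d ∈ S, Λ d) ∈ Z (l ++ Q) := by
  have hZ (S : Finset ℤ) (u : ν) :
      VanishesBelow Z (fun x => col x ∈ S) l.length u (X u ^ (∑ d ∈ S, Λ d)) :=
    fun l' Q _ hu hS => X_pow_sum_mem h hcyc hu hS
  obtain ⟨P, T, rfl⟩ := List.append_of_mem hu
  suffices X u ^ _ ∈ Z (P ++ u :: (T ++ Q)) by simpa using this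
  by_cases hP : ∃ z ∈ P, col z = col u
  · obtain ⟨P, z, B, rfl, hzu, hB⟩ := exists_append_cons_forall_not hP
    suffices X u ^ _ ∈ Z (P ++ z :: (B ++ u :: (T ++ Q))) by simpa using this
    exact h.X_pow_mem_of_col_eq (hZ S u) (hZ S z) hzu hB (by grind) (by grind)
  · exact h.X_pow_sum_mem_of_forall_col_ne hcyc hZ (by grind) (by grind) (by grind)
termination_by l.length

end IsKLRAnnihilator

/-! ### The antigravity bound -/

theorem agBound_le_level (Λ : ℤ →₀ ℕ) (l : List ℤ) (r : ℕ) :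
    agBound Λ l r ≤ Λ.sum fun _ n => n := by
  rw [Finsupp.sum_of_support_subset _ Finset.subset_union_left _ (by simp)]
  exact Finset.sum_le_sum_of_subset (Finset.subset_union_right (s₁ := Λ.support))

theorem heapRel_ofFn_iff {m : ℕ} {q : Fin m → ℤ} {a b : Fin m} :
    HeapRel (List.ofFn q) a b ↔ a < b ∧ ¬ Orth adjZ (q a) (q b) := by
  simp only [HeapRel, Fin.val_fin_lt, List.length_ofFn, Fin.is_lt, List.getD_eq_getElem?_getD,
    getElem?_pos, List.getElem_ofFn, Fin.eta, Option.getD_some, true_and, orth_adjZ_iff]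
  omega

theorem orth_of_trapped_of_not_trapped {m : ℕ} {q : Fin m → ℤ} {r : ℕ} {a b : Fin m} (hab : a < b)
    (ha : ¬ Trapped (List.ofFn q) r a) (hb : Trapped (List.ofFn q) r b) :
    Orth adjZ (q a) (q b) := by
  by_contra hq
  exact ha (.head (heapRel_ofFn_iff.2 ⟨hab, hq⟩) hb)

theorem mem_trappedRunners_of_trapped {m : ℕ} {q : Fin m → ℤ} {r : ℕ} {a : Fin m}
    (ha : Trapped (List.ofFn q) r a) : q a ∈ trappedRunners (List.ofFn q) r := by
  classical
  exact Finset.mem_image.2 ⟨a, by simpa using ha, by simp⟩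

theorem level_nilpotency_general {m : ℕ} {A : Type} [Ring A] {Λ : ℤ →₀ ℕ}
    (K : CycKLR ℤ adjZ m A Λ) (q : Fin m → ℤ) (r : Fin m) :
    K.x r q ^ agBound Λ (List.ofFn q) r * K.e q = 0 := by
  classical
  have h := K.isKLRAnnihilator_labelledAnnihilator q
  have hmem : MvPolynomial.X r ^ agBound Λ (List.ofFn q) r ∈
      K.labelledAnnihilator q ([] ++ (List.finRange m ++ [])) := by
    refine h.append_mem_of_filter_mem (fun a => Trapped (List.ofFn q) r a)
      ((List.pairwise_lt_finRange m).imp orth_of_trapped_of_not_trapped) ?_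
    rw [List.nil_append]
    refine h.X_pow_sum_mem (K.X_pow_mem_labelledAnnihilator q) ?_ ?_
    · simpa using! (Relation.ReflTransGen.refl : Trapped (List.ofFn q) r r)
    · exact fun a ha => mem_trappedRunners_of_trapped (by simpa using ha)
  have hrename := KLR.mem_labelledAnnihilator.1 hmem (Equiv.refl _) (by simp [List.ofFn_id])
  simpa [KLR.mem_dotAnnihilator, KLR.dotEval_X] using hrename

/-- Brundan–Kleshchev conjecture.  If `ℓ = ℓ(Λ) = Σ_i λ_i` is
the level of `Λ`, then `x_{r,i}^ℓ = 0` in `R_ν^Λ` for every sequence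
`i ∈ Seq(ν)` and every strand `r`, for the quiver of type `A_∞`. -/
theorem level_nilpotency {m : ℕ} {A : Type} [Ring A] {Λ : ℤ →₀ ℕ}
    (K : CycKLR ℤ adjZ m A Λ) (q : Fin m → ℤ) (r : Fin m) :
    K.x r q ^ (Λ.sum fun _ n => n) * K.e q = 0 := by
  rw [← pow_sub_mul_pow _ (agBound_le_level Λ (List.ofFn q) r), mul_assoc,
    level_nilpotency_general, mul_zero]

end KLRPaper
end
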